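/- arXiv:2001.03033 — 5 statements merged into one kernel-verified Lean document; each statement's English description precedes it below -/
import Mathlib

section
/- Let q ∈ ℂ with 0 < |q| < 1 and let g : ℂ∖{0} → ℂ be holomorphic. Set g₀ := (1/(2πi))·∮_{|z|=1} g(z)/z dz (the zeroth Laurent coefficient of g). Then there exists a holomorphic function φ : ℂ∖{0} → ℂ satisfying φ(q·z) − φ(z) = g(z) for all z ∈ ℂ∖{0} if and only if g₀ = 0; moreover any two holomorphic solutions φ, φ' of this functional equation differ by an additive constant. -/
open Complex

/-! Every `g` holomorphic on the punctured plane splits as `g z = a z + b z⁻¹ - g₀` with `a` and `b`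
entire and `a 0 = b 0 = g₀`: this is Cauchy's formula on an annulus, and the inversion `w ↦ w⁻¹`
turns the integral over the inner circle into one of the same shape as that over the outer circle.
If `g₀ = 0`, then `a` and `b` vanish at `0`, so `∑ₙ a (qⁿ u)` and `∑ₙ b (qⁿ u)` converge locally
uniformly, like geometric series, and telescope to a solution. Conversely the mean of `z ↦ φ (q z)`
over the unit circle is the mean of `φ` over the circle of radius `‖q‖`, which by Cauchy's theorem
does not depend on the radius. Finally, a difference of two solutions is invariant under `z ↦ q z`,
hence bounded by its maximum on the annulus `‖q‖ ≤ ‖z‖ ≤ 1`, and Liouville's theorem applies. -/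

section CircleAverage

open Real (circleAverage)
open Metric Set

section RealNormedSpace

variable {E : Type*} [NormedAddCommGroup E] [NormedSpace ℝ E]

theorem circleAverage_comp_mul_left (f : ℂ → E) (a : ℂ) (R : ℝ) :
    circleAverage (fun z ↦ f (a * z)) 0 R = circleAverage f 0 (‖a‖ * R) := by
  have mul_circleMap (θ : ℝ) : a * circleMap 0 R θ = circleMap 0 (‖a‖ * R) (θ + a.arg) := by
    nth_rw 1 [← norm_mul_exp_arg_mul_I a]
    rw [← circleMap_zero, circleMap_zero_mul, add_comm]
  simp only [Real.circleAverage_def (R := R), mul_circleMap]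
  exact (Real.circleAverage_eq_integral_add a.arg).symm

theorem circleAverage_comp_inv (f : ℂ → E) (R : ℝ) :
    circleAverage (fun z ↦ f z⁻¹) 0 R = circleAverage f 0 R⁻¹ := by
  rw [Real.circleAverage_eq_circleAverage_zero_one (R := R),
    ← Real.circleAverage_zero_one_congr_inv,
    Real.circleAverage_eq_circleAverage_zero_one (R := R⁻¹)]
  simp only [add_zero, mul_inv, inv_inv, ofReal_inv]

end RealNormedSpace

variable {E : Type*} [NormedAddCommGroup E] [NormedSpace ℂ E] {f : ℂ → E} {c z : ℂ} {r R : ℝ}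

theorem closedBall_diff_ball_mem_nhds (hrz : r < ‖z - c‖) (hzR : ‖z - c‖ < R) :
    closedBall c R \ ball c r ∈ nhds z :=
  Filter.mem_of_superset
    ((isOpen_ball.sdiff isClosed_closedBall).mem_nhds (by simpa [dist_eq] using ⟨hzR, hrz⟩))
    (sdiff_subset_sdiff ball_subset_closedBall ball_subset_closedBall)

theorem circleAverage_eq_of_differentiableOn_annulus (hr : 0 < r) (hrR : r ≤ R)
    (hf : DifferentiableOn ℂ f (closedBall c R \ ball c r)) :
    circleAverage f c R = circleAverage f c r := by
  rw [Real.circleAverage_eq_circleIntegral (hr.trans_le hrR).ne',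
    Real.circleAverage_eq_circleIntegral hr.ne',
    circleIntegral_sub_center_inv_smul_eq_of_differentiable_on_annulus_off_countable hr hrR
      countable_empty hf.continuousOn fun w hw ↦ ?_]
  exact hf.differentiableAt <| closedBall_diff_ball_mem_nhds
    (by simpa [dist_eq] using hw.1.2) (by simpa [dist_eq] using hw.1.1)

theorem differentiableOn_circleAverage_div_sub_smul [CompleteSpace E] (hR : 0 < R)
    (hf : CircleIntegrable f c R) :
    DifferentiableOn ℂ (fun z ↦ circleAverage (fun w ↦ ((w - c) / (w - z)) • f w) c R)
      (ball c R) := by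
  have eq_cauchyIntegral (z : ℂ) : circleAverage (fun w ↦ ((w - c) / (w - z)) • f w) c R =
      (2 * Real.pi * I : ℂ)⁻¹ • ∮ w in C(c, R), (w - z)⁻¹ • f w := by
    rw [Real.circleAverage_eq_circleIntegral hR.ne']
    congr 1
    refine circleIntegral.integral_congr hR.le fun w hw ↦ ?_
    have hwc : w - c ≠ 0 := sub_ne_zero.2 (ne_of_mem_sphere hw hR.ne')
    simp only [smul_smul]
    field_simp
  simp only [eq_cauchyIntegral]
  lift R to NNReal using hR.le
  rw [← eball_coe]
  exact (hasFPowerSeriesOn_cauchy_integral hf (by exact_mod_cast hR)).differentiableOn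

theorem circleAverage_sub_smul_dslope (hR : 0 < R) (hf : ContinuousOn f (sphere c R))
    (hz : z ∉ sphere c R) :
    circleAverage (fun w ↦ (w - c) • dslope f z w) c R =
      circleAverage (fun w ↦ ((w - c) / (w - z)) • f w) c R -
        circleAverage (fun w ↦ ((w - c) / (w - z)) • f z) c R := by
  have ne_z {w : ℂ} (hw : w ∈ sphere c R) : w ≠ z := ne_of_mem_of_not_mem hw hz
  have kernel_continuousOn : ContinuousOn (fun w ↦ (w - c) / (w - z)) (sphere c R) := by
    fun_prop (disch := exact fun w hw ↦ sub_ne_zero.2 (ne_z hw))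
  rw [← Real.circleAverage_fun_sub ((kernel_continuousOn.fun_smul hf).circleIntegrable hR.le)
    ((kernel_continuousOn.fun_smul continuousOn_const).circleIntegrable hR.le)]
  refine Real.circleAverage_congr_sphere fun w hw ↦ ?_
  rw [abs_of_pos hR] at hw
  simp only [dslope_of_ne _ (ne_z hw), slope_def_module, smul_smul, smul_sub, div_eq_mul_inv]

theorem circleAverage_div_sub_smul_const_eq_zero [CompleteSpace E] (a : E) (hr : 0 ≤ r)
    (hrz : r < ‖z - c‖) : circleAverage (fun w ↦ ((w - c) / (w - z)) • a) c r = 0 := by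
  have kernel_differentiableOn :
      DifferentiableOn ℂ (fun w ↦ ((w - c) / (w - z)) • a) (closedBall c |r|) := by
    refine fun w hw ↦ DifferentiableAt.differentiableWithinAt ?_
    have hwz : w - z ≠ 0 := by
      rintro h
      rw [sub_eq_zero.1 h, mem_closedBall, dist_eq, abs_of_nonneg hr] at hw
      exact hrz.not_ge hw
    fun_prop (disch := assumption)
  have mean_value :=
    (kernel_differentiableOn.mono closure_ball_subset_closedBall).diffContOnCl.circleAverage
  simpa only [sub_self, zero_div, zero_smul] using mean_value

/-- Both means of `w ↦ (w - c) • dslope f z w` agree, and splitting the slope leaves the mean of the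
kernel `(w - c) / (w - z)`, which is `1` on the outer and `0` on the inner circle. -/
theorem eq_circleAverage_sub_circleAverage_of_differentiableOn_annulus [CompleteSpace E]
    (hr : 0 < r) (hrz : r < ‖z - c‖) (hzR : ‖z - c‖ < R)
    (hf : DifferentiableOn ℂ f (closedBall c R \ ball c r)) :
    f z = circleAverage (fun w ↦ ((w - c) / (w - z)) • f w) c R -
      circleAverage (fun w ↦ ((w - c) / (w - z)) • f w) c r := by
  have hrR : r ≤ R := (hrz.trans hzR).le
  have hR : 0 < R := hr.trans_le hrR
  have f_continuousOn {ρ : ℝ} (hρ : ρ ∈ Icc r R) : ContinuousOn f (sphere c ρ) :=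
    hf.continuousOn.mono fun w hw ↦ by simpa [mem_sphere.1 hw, and_comm] using hρ
  have dslope_differentiableOn : DifferentiableOn ℂ (dslope f z) (closedBall c R \ ball c r) :=
    (differentiableOn_dslope (closedBall_diff_ball_mem_nhds hrz hzR)).2 hf
  have same_mean : circleAverage (fun w ↦ (w - c) • dslope f z w) c R =
      circleAverage (fun w ↦ (w - c) • dslope f z w) c r :=
    circleAverage_eq_of_differentiableOn_annulus hr hrR <|
      (differentiableOn_id.sub_const c).smul dslope_differentiableOn
  have outer_mean : circleAverage (fun w ↦ ((w - c) / (w - z)) • f z) c R = f z :=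
    diffContOnCl_const.circleAverage_smul_div (by simpa [dist_eq, abs_of_pos hR] using hzR)
  have inner_mean : circleAverage (fun w ↦ ((w - c) / (w - z)) • f z) c r = 0 :=
    circleAverage_div_sub_smul_const_eq_zero (f z) hr.le hrz
  rw [circleAverage_sub_smul_dslope hR (f_continuousOn ⟨hrR, le_rfl⟩)
      (by simpa [dist_eq] using hzR.ne), outer_mean,
    circleAverage_sub_smul_dslope hr (f_continuousOn ⟨le_rfl, hrR⟩)
      (by simpa [dist_eq] using hrz.ne'), inner_mean, sub_zero] at same_mean
  exact (sub_eq_of_eq_add' (sub_eq_iff_eq_add.1 same_mean)).symm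

theorem circleAverage_eq_one_div_mul_circleIntegral_div (g : ℂ → ℂ) (hR : R ≠ 0) :
    circleAverage g 0 R = 1 / (2 * (Real.pi : ℂ) * I) * ∮ z in C(0, R), g z / z := by
  simp only [Real.circleAverage_eq_circleIntegral hR, sub_zero, smul_eq_mul, div_eq_inv_mul,
    mul_one]

end CircleAverage

section PuncturedPlane

open Real (circleAverage)
open Metric Set

variable {E : Type*} [NormedAddCommGroup E] [NormedSpace ℂ E] {g : ℂ → E} {z : ℂ} {r R : ℝ}

theorem annulus_subset_ne_zero (hr : 0 < r) :
    closedBall (0 : ℂ) R \ ball 0 r ⊆ {z : ℂ | z ≠ 0} := by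
  rintro _ ⟨-, h⟩ rfl
  exact h (mem_ball_self hr)

theorem sphere_subset_ne_zero (hr : 0 < r) : sphere (0 : ℂ) r ⊆ {z : ℂ | z ≠ 0} :=
  fun _ hz ↦ ne_of_mem_sphere hz hr.ne'

theorem circleAverage_eq_of_differentiableOn_ne_zero (hr : 0 < r) (hR : 0 < R)
    (hg : DifferentiableOn ℂ g {z : ℂ | z ≠ 0}) :
    circleAverage g 0 R = circleAverage g 0 r := by
  wlog hrR : r ≤ R generalizing r R
  · exact (this hR hr (le_of_not_ge hrR)).symm
  exact circleAverage_eq_of_differentiableOn_annulus hr hrR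
    (hg.mono (annulus_subset_ne_zero hr))

theorem circleAverage_comp_mul_left_sub_eq_zero {q : ℂ} (hq : q ≠ 0) (hr : 0 < r)
    (hg : DifferentiableOn ℂ g {z : ℂ | z ≠ 0}) :
    circleAverage (fun z ↦ g (q * z) - g z) 0 r = 0 := by
  have hqr : 0 < ‖q‖ * r := mul_pos (norm_pos_iff.2 hq) hr
  have comp_continuousOn : ContinuousOn (fun z ↦ g (q * z)) (sphere 0 r) :=
    hg.continuousOn.comp (by fun_prop) fun z hz ↦ mul_ne_zero hq (sphere_subset_ne_zero hr hz)
  rw [Real.circleAverage_fun_sub (comp_continuousOn.circleIntegrable hr.le)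
      ((hg.continuousOn.mono (sphere_subset_ne_zero hr)).circleIntegrable hr.le),
    circleAverage_comp_mul_left, circleAverage_eq_of_differentiableOn_ne_zero hr hqr hg, sub_self]

/-- The regular part `∑ n ≥ 0, cₙ zⁿ` of the Laurent series `∑ n, cₙ zⁿ` of a function `g`
holomorphic on the punctured plane, as a Cauchy integral. Any circle around both `0` and `z` gives
the same value (`regularPart_eq_circleAverage`); the radius `‖z‖ + 1` is an arbitrary choice. -/
noncomputable def regularPart (g : ℂ → E) (z : ℂ) : E :=
  circleAverage (fun w ↦ (w / (w - z)) • g w) 0 (‖z‖ + 1)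

theorem regularPart_eq_circleAverage (hg : DifferentiableOn ℂ g {z : ℂ | z ≠ 0}) (hzR : ‖z‖ < R) :
    regularPart g z = circleAverage (fun w ↦ (w / (w - z)) • g w) 0 R := by
  have kernel_smul_differentiableOn {ρ σ : ℝ} (hzρ : ‖z‖ < ρ) :
      DifferentiableOn ℂ (fun w ↦ (w / (w - z)) • g w) (closedBall 0 σ \ ball 0 ρ) := by
    refine DifferentiableOn.smul (fun w hw ↦ DifferentiableAt.differentiableWithinAt ?_)
      (hg.mono (annulus_subset_ne_zero ((norm_nonneg z).trans_lt hzρ)))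
    have hwz : w - z ≠ 0 := by
      rintro h
      rw [sub_eq_zero.1 h] at hw
      exact hw.2 (mem_ball_zero_iff.2 hzρ)
    fun_prop (disch := assumption)
  have hz : ‖z‖ < ‖z‖ + 1 := lt_add_one _
  rcases le_total R (‖z‖ + 1) with h | h
  · exact circleAverage_eq_of_differentiableOn_annulus ((norm_nonneg z).trans_lt hzR) h
      (kernel_smul_differentiableOn hzR)
  · exact (circleAverage_eq_of_differentiableOn_annulus ((norm_nonneg z).trans_lt hz) h
      (kernel_smul_differentiableOn hz)).symm

theorem differentiable_regularPart [CompleteSpace E] (hg : DifferentiableOn ℂ g {z : ℂ | z ≠ 0}) :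
    Differentiable ℂ (regularPart g) := by
  intro z
  have hR : 0 < ‖z‖ + 1 := by positivity
  have ball_mem_nhds : ball (0 : ℂ) (‖z‖ + 1) ∈ nhds z := isOpen_ball.mem_nhds (by simp)
  have g_integrable : CircleIntegrable g 0 (‖z‖ + 1) :=
    (hg.continuousOn.mono (sphere_subset_ne_zero hR)).circleIntegrable hR.le
  refine ((differentiableOn_circleAverage_div_sub_smul hR g_integrable).differentiableAt
    ball_mem_nhds).congr_of_eventuallyEq ?_
  filter_upwards [ball_mem_nhds] with u hu
  simpa only [sub_zero] using regularPart_eq_circleAverage hg (mem_ball_zero_iff.1 hu)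

theorem regularPart_zero (g : ℂ → E) : regularPart g 0 = circleAverage g 0 1 := by
  rw [regularPart, norm_zero, zero_add]
  refine Real.circleAverage_congr_sphere fun w hw ↦ ?_
  rw [abs_one] at hw
  simp only [sub_zero, div_self (ne_of_mem_sphere hw one_ne_zero), one_smul]

theorem differentiableOn_comp_inv_ne_zero (hg : DifferentiableOn ℂ g {z : ℂ | z ≠ 0}) :
    DifferentiableOn ℂ (fun z ↦ g z⁻¹) {z : ℂ | z ≠ 0} :=
  hg.comp differentiableOn_inv fun _ hz ↦ inv_ne_zero hz

theorem inv_div_inv_sub {K : Type*} [Field K] {w z : K} (hw : w ≠ 0) (hz : z ≠ 0)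
    (hwz : w - z⁻¹ ≠ 0) : w⁻¹ / (w⁻¹ - z) = 1 - w / (w - z⁻¹) := by
  have denom_eq : w⁻¹ - z = -(z / w * (w - z⁻¹)) := by field
  rw [denom_eq, one_sub_div hwz, sub_sub_cancel_left, div_neg, neg_div, ← div_div]
  congr 2
  field

theorem circleAverage_div_sub_smul_eq_sub_regularPart
    (hg : DifferentiableOn ℂ g {z : ℂ | z ≠ 0}) (hr : 0 < r) (hrz : r < ‖z‖) :
    circleAverage (fun w ↦ (w / (w - z)) • g w) 0 r =
      circleAverage g 0 1 - regularPart (fun w ↦ g w⁻¹) z⁻¹ := by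
  have hr' : 0 < r⁻¹ := inv_pos.2 hr
  have hz : z ≠ 0 := norm_pos_iff.1 (hr.trans hrz)
  have hzr : ‖z⁻¹‖ < r⁻¹ := by
    rw [norm_inv]
    exact inv_strictAnti₀ hr hrz
  have ne_inv {w : ℂ} (hw : w ∈ sphere (0 : ℂ) r⁻¹) : w - z⁻¹ ≠ 0 := by
    rintro h
    rw [sub_eq_zero.1 h, mem_sphere_zero_iff_norm] at hw
    exact hzr.ne hw
  have g_inv_continuousOn : ContinuousOn (fun w ↦ g w⁻¹) (sphere 0 r⁻¹) :=
    (differentiableOn_comp_inv_ne_zero hg).continuousOn.mono (sphere_subset_ne_zero hr')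
  have kernel_continuousOn : ContinuousOn (fun w ↦ w / (w - z⁻¹)) (sphere 0 r⁻¹) := by
    fun_prop (disch := exact fun w hw ↦ ne_inv hw)
  calc circleAverage (fun w ↦ (w / (w - z)) • g w) 0 r
    _ = circleAverage (fun w ↦ (w⁻¹ / (w⁻¹ - z)) • g w⁻¹) 0 r⁻¹ := by
      rw [circleAverage_comp_inv (fun w ↦ (w / (w - z)) • g w), inv_inv]
    _ = circleAverage (fun w ↦ g w⁻¹ - (w / (w - z⁻¹)) • g w⁻¹) 0 r⁻¹ := by
      refine Real.circleAverage_congr_sphere fun w hw ↦ ?_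
      rw [abs_of_pos hr'] at hw
      have hw0 : w ≠ 0 := sphere_subset_ne_zero hr' hw
      simp only [inv_div_inv_sub hw0 hz (ne_inv hw), sub_smul, one_smul]
    _ = circleAverage g 0 1 - regularPart (fun w ↦ g w⁻¹) z⁻¹ := by
      rw [Real.circleAverage_fun_sub (g_inv_continuousOn.circleIntegrable hr'.le)
          ((kernel_continuousOn.fun_smul g_inv_continuousOn).circleIntegrable hr'.le),
        circleAverage_comp_inv, inv_inv,
        circleAverage_eq_of_differentiableOn_ne_zero one_pos hr hg,
        regularPart_eq_circleAverage (differentiableOn_comp_inv_ne_zero hg) hzr]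

theorem eq_regularPart_add_regularPart_inv_sub [CompleteSpace E]
    (hg : DifferentiableOn ℂ g {z : ℂ | z ≠ 0}) (hz : z ≠ 0) :
    g z = regularPart g z + regularPart (fun w ↦ g w⁻¹) z⁻¹ - circleAverage g 0 1 := by
  have half_pos : 0 < ‖z‖ / 2 := half_pos (norm_pos_iff.2 hz)
  have half_lt : ‖z‖ / 2 < ‖z‖ := half_lt_self (norm_pos_iff.2 hz)
  have lt_succ : ‖z‖ < ‖z‖ + 1 := lt_add_one _
  have cauchy_formula := eq_circleAverage_sub_circleAverage_of_differentiableOn_annulus (c := 0)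
    half_pos (by rwa [sub_zero]) (by rwa [sub_zero]) (hg.mono (annulus_subset_ne_zero half_pos))
  simp only [sub_zero] at cauchy_formula
  rw [cauchy_formula, circleAverage_div_sub_smul_eq_sub_regularPart hg half_pos half_lt]
  simp only [regularPart]
  abel

end PuncturedPlane

section DilationSum

open Metric

variable {E : Type*} [NormedAddCommGroup E] [NormedSpace ℂ E] {q : ℂ} {h : ℂ → E}

/-- The sum of `h` over the forward orbit of `u` under `u ↦ q u`; the difference operator
`H ↦ H (q u) - H u` sends it to `-h` (`dilationSum_mul_sub`). It takes the junk value `0` where the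
series diverges. -/
noncomputable def dilationSum (q : ℂ) (h : ℂ → E) (u : ℂ) : E :=
  ∑' n : ℕ, h (q ^ n * u)

theorem exists_norm_comp_pow_mul_le [CompleteSpace E] (hq : ‖q‖ ≤ 1) (hh : Differentiable ℂ h)
    (h0 : h 0 = 0) (R : ℝ) :
    ∃ C, ∀ n : ℕ, ∀ u ∈ ball (0 : ℂ) R, ‖h (q ^ n * u)‖ ≤ C * ‖q‖ ^ n := by
  obtain ⟨K, hK⟩ := ((hh.contDiff (n := 1)).restrict_scalars ℝ).contDiffOn.exists_lipschitzOnWith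
    one_ne_zero (convex_closedBall (0 : ℂ) R) (isCompact_closedBall 0 R)
  refine ⟨K * R, fun n u hu ↦ ?_⟩
  have hu : ‖u‖ ≤ R := (mem_ball_zero_iff.1 hu).le
  have pow_mul_mem : q ^ n * u ∈ closedBall 0 R := by
    rw [mem_closedBall_zero_iff, norm_mul, norm_pow]
    exact (mul_le_of_le_one_left (norm_nonneg u) (pow_le_one₀ (norm_nonneg q) hq)).trans hu
  calc ‖h (q ^ n * u)‖
    _ ≤ K * ‖q ^ n * u‖ := by
      simpa [dist_eq_norm, h0] using hK.dist_le_mul _ pow_mul_mem 0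
        (mem_closedBall_self ((norm_nonneg u).trans hu))
    _ ≤ K * (‖q‖ ^ n * R) := by
      rw [norm_mul, norm_pow]
      gcongr
    _ = K * R * ‖q‖ ^ n := by ring

variable [CompleteSpace E]

theorem summable_comp_pow_mul (hq : ‖q‖ < 1) (hh : Differentiable ℂ h) (h0 : h 0 = 0) (u : ℂ) :
    Summable fun n : ℕ ↦ h (q ^ n * u) := by
  obtain ⟨C, hC⟩ := exists_norm_comp_pow_mul_le hq.le hh h0 (‖u‖ + 1)
  exact .of_norm_bounded ((summable_geometric_of_lt_one (norm_nonneg q) hq).mul_left C)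
    fun n ↦ hC n u (by simp)

theorem differentiable_dilationSum (hq : ‖q‖ < 1) (hh : Differentiable ℂ h) (h0 : h 0 = 0) :
    Differentiable ℂ (dilationSum q h) := by
  intro u
  obtain ⟨C, hC⟩ := exists_norm_comp_pow_mul_le hq.le hh h0 (‖u‖ + 1)
  have geometric_summable : Summable fun n : ℕ ↦ C * ‖q‖ ^ n :=
    (summable_geometric_of_lt_one (norm_nonneg q) hq).mul_left C
  exact (differentiableOn_tsum_of_summable_norm geometric_summable
    (fun n ↦ (hh.comp (differentiable_id.const_mul (q ^ n))).differentiableOn) isOpen_ball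
    hC).differentiableAt (isOpen_ball.mem_nhds (by simp))

theorem dilationSum_mul_sub (hq : ‖q‖ < 1) (hh : Differentiable ℂ h) (h0 : h 0 = 0) (u : ℂ) :
    dilationSum q h (q * u) - dilationSum q h u = -h u := by
  have split_first_term : dilationSum q h u = h u + dilationSum q h (q * u) := by
    simpa only [dilationSum, pow_zero, one_mul, pow_succ, mul_assoc]
      using (summable_comp_pow_mul hq hh h0 u).tsum_eq_zero_add
  rw [split_first_term]
  abel

end DilationSum

section DilationInvariant

open Metric Set

variable {E : Type*} [NormedAddCommGroup E] {q : ℂ} {ψ : ℂ → E}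

theorem exists_norm_le_of_comp_mul_eq (hq0 : q ≠ 0) (hq1 : ‖q‖ < 1)
    (hψ : ContinuousOn ψ {z : ℂ | z ≠ 0}) (hinv : ∀ z ≠ 0, ψ (q * z) = ψ z) :
    ∃ C, ∀ z ≠ 0, ‖ψ z‖ ≤ C := by
  have hq0' : 0 < ‖q‖ := norm_pos_iff.2 hq0
  have annulus_compact : IsCompact (closedBall (0 : ℂ) 1 \ ball 0 ‖q‖) :=
    (isCompact_closedBall 0 1).diff isOpen_ball
  obtain ⟨C, hC⟩ :=
    annulus_compact.exists_bound_of_continuousOn (hψ.mono (annulus_subset_ne_zero hq0'))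
  have periodic : Function.Periodic (fun w ↦ ψ (exp w)) (log q) := fun w ↦ by
    simp only [exp_add, exp_log hq0, mul_comm _ q, hinv _ (exp_ne_zero w)]
  refine ⟨C, fun z hz ↦ ?_⟩
  obtain ⟨n, ⟨hn₀, hn₁⟩, -⟩ :=
    existsUnique_add_zsmul_mem_Ico (neg_pos.2 (Real.log_neg hq0' hq1)) (log z).re (Real.log ‖q‖)
  have translate_mem : exp (log z - n • log q) ∈ closedBall (0 : ℂ) 1 \ ball 0 ‖q‖ := by
    have norm_eq : ‖exp (log z - n • log q)‖ = Real.exp ((log z).re + n • -Real.log ‖q‖) := by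
      simp [norm_exp, log_re, sub_eq_add_neg]
    rw [mem_sdiff, mem_closedBall_zero_iff, mem_ball_zero_iff, norm_eq, not_lt]
    exact ⟨Real.exp_le_one_iff.2 (by linarith), (Real.log_le_iff_le_exp hq0').1 hn₀⟩
  calc ‖ψ z‖ = ‖ψ (exp (log z - n • log q))‖ := by
        rw [periodic.sub_zsmul_eq n, exp_log hz]
    _ ≤ C := hC _ translate_mem

variable [NormedSpace ℂ E]

theorem exists_eq_const_of_differentiableOn_ne_zero_of_bounded {C : ℝ}
    (hψ : DifferentiableOn ℂ ψ {z : ℂ | z ≠ 0}) (hC : ∀ z ≠ 0, ‖ψ z‖ ≤ C) :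
    ∃ c, ∀ z ≠ 0, ψ z = c := by
  have comp_exp_differentiable : Differentiable ℂ (fun w ↦ ψ (exp w)) := fun w ↦
    (hψ.differentiableAt (isOpen_ne.mem_nhds (exp_ne_zero w))).comp w differentiableAt_exp
  have comp_exp_bounded : Bornology.IsBounded (range fun w ↦ ψ (exp w)) :=
    isBounded_iff_forall_norm_le.2 ⟨C, forall_mem_range.2 fun w ↦ hC _ (exp_ne_zero w)⟩
  refine ⟨ψ (exp 0), fun z hz ↦ ?_⟩
  simpa only [exp_log hz] using
    comp_exp_differentiable.apply_eq_apply_of_bounded comp_exp_bounded (log z) 0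

theorem exists_eq_const_of_comp_mul_eq (hq0 : q ≠ 0) (hq1 : ‖q‖ < 1)
    (hψ : DifferentiableOn ℂ ψ {z : ℂ | z ≠ 0}) (hinv : ∀ z ≠ 0, ψ (q * z) = ψ z) :
    ∃ c, ∀ z ≠ 0, ψ z = c :=
  let ⟨_, hC⟩ := exists_norm_le_of_comp_mul_eq hq0 hq1 hψ.continuousOn hinv
  exists_eq_const_of_differentiableOn_ne_zero_of_bounded hψ hC

end DilationInvariant

section DifferenceEquation

open Real (circleAverage)

variable {E : Type*} [NormedAddCommGroup E] [NormedSpace ℂ E] {q : ℂ} {g : ℂ → E}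

theorem circleAverage_eq_zero_of_comp_mul_sub_eq (hq : q ≠ 0) {φ : ℂ → E}
    (hφ : DifferentiableOn ℂ φ {z : ℂ | z ≠ 0}) (hφg : ∀ z ≠ 0, φ (q * z) - φ z = g z) :
    circleAverage g 0 1 = 0 := by
  rw [← circleAverage_comp_mul_left_sub_eq_zero hq one_pos hφ]
  refine Real.circleAverage_congr_sphere fun z hz ↦ (hφg z ?_).symm
  exact sphere_subset_ne_zero (by simp) hz

theorem exists_comp_mul_sub_eq [CompleteSpace E] (hq0 : q ≠ 0) (hq1 : ‖q‖ < 1)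
    (hg : DifferentiableOn ℂ g {z : ℂ | z ≠ 0}) (hg0 : circleAverage g 0 1 = 0) :
    ∃ φ : ℂ → E, DifferentiableOn ℂ φ {z : ℂ | z ≠ 0} ∧ ∀ z ≠ 0, φ (q * z) - φ z = g z := by
  set a := regularPart g
  set b := regularPart fun w ↦ g w⁻¹
  have ha : Differentiable ℂ a := differentiable_regularPart hg
  have hb : Differentiable ℂ b := differentiable_regularPart (differentiableOn_comp_inv_ne_zero hg)
  have ha0 : a 0 = 0 := (regularPart_zero g).trans hg0
  have hb0 : b 0 = 0 := by
    rw [← hg0, ← Real.circleAverage_zero_one_congr_inv]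
    exact regularPart_zero _
  refine ⟨fun z ↦ dilationSum q b (q * z⁻¹) - dilationSum q a z, fun z hz ↦ ?_, fun z hz ↦ ?_⟩
  · have inner_differentiableAt : DifferentiableAt ℂ (fun z : ℂ ↦ q * z⁻¹) z :=
      (differentiableAt_inv hz).const_mul q
    exact (((differentiable_dilationSum hq1 hb hb0 _).comp z inner_differentiableAt).sub
      (differentiable_dilationSum hq1 ha ha0 z)).differentiableWithinAt
  · have mul_mul_inv : q * (q * z)⁻¹ = z⁻¹ := by field_simp
    calc dilationSum q b (q * (q * z)⁻¹) - dilationSum q a (q * z) -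
          (dilationSum q b (q * z⁻¹) - dilationSum q a z)
      _ = -(dilationSum q a (q * z) - dilationSum q a z) -
          (dilationSum q b (q * z⁻¹) - dilationSum q b z⁻¹) := by
        rw [mul_mul_inv]
        abel
      _ = a z + b z⁻¹ := by
        rw [dilationSum_mul_sub hq1 ha ha0, dilationSum_mul_sub hq1 hb hb0, neg_neg, sub_neg_eq_add]
      _ = g z := by
        rw [eq_regularPart_add_regularPart_inv_sub hg hz, hg0, sub_zero]

theorem exists_eq_add_const_of_comp_mul_sub_eq (hq0 : q ≠ 0) (hq1 : ‖q‖ < 1) {φ φ' : ℂ → E}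
    (hφ : DifferentiableOn ℂ φ {z : ℂ | z ≠ 0}) (hφg : ∀ z ≠ 0, φ (q * z) - φ z = g z)
    (hφ' : DifferentiableOn ℂ φ' {z : ℂ | z ≠ 0}) (hφg' : ∀ z ≠ 0, φ' (q * z) - φ' z = g z) :
    ∃ c, ∀ z ≠ 0, φ' z = φ z + c := by
  have sub_invariant (z : ℂ) (hz : z ≠ 0) : φ' (q * z) - φ (q * z) = φ' z - φ z := by
    rw [sub_eq_sub_iff_sub_eq_sub, hφg' z hz, hφg z hz]
  obtain ⟨c, hc⟩ := exists_eq_const_of_comp_mul_eq hq0 hq1 (hφ'.sub hφ) sub_invariant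
  exact ⟨c, fun z hz ↦ sub_eq_iff_eq_add'.1 (hc z hz)⟩

theorem statement0_general [CompleteSpace E] (hq0 : q ≠ 0) (hq1 : ‖q‖ < 1)
    (hg : DifferentiableOn ℂ g {z : ℂ | z ≠ 0}) :
    ((∃ φ : ℂ → E, DifferentiableOn ℂ φ {z : ℂ | z ≠ 0} ∧ ∀ z ≠ 0, φ (q * z) - φ z = g z) ↔
      circleAverage g 0 1 = 0) ∧
    ∀ φ φ' : ℂ → E,
      DifferentiableOn ℂ φ {z : ℂ | z ≠ 0} →
      (∀ z ≠ 0, φ (q * z) - φ z = g z) →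
      DifferentiableOn ℂ φ' {z : ℂ | z ≠ 0} →
      (∀ z ≠ 0, φ' (q * z) - φ' z = g z) →
      ∃ c, ∀ z ≠ 0, φ' z = φ z + c :=
  ⟨⟨fun ⟨_, hφ, hφg⟩ ↦ circleAverage_eq_zero_of_comp_mul_sub_eq hq0 hφ hφg,
    exists_comp_mul_sub_eq hq0 hq1 hg⟩,
    fun _ _ hφ hφg hφ' hφg' ↦ exists_eq_add_const_of_comp_mul_sub_eq hq0 hq1 hφ hφg hφ' hφg'⟩

end DifferenceEquation

/-- existence of a holomorphic solution of the functional equation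
`φ(q·z) − φ(z) = g(z)` on the punctured plane iff the zeroth Laurent coefficient
`g₀ = (1/(2πi))·∮_{|z|=1} g(z)/z dz` vanishes; uniqueness up to an additive constant. -/
theorem statement0 (q : ℂ) (hq0 : 0 < ‖q‖) (hq1 : ‖q‖ < 1)
    (g : ℂ → ℂ) (hg : DifferentiableOn ℂ g {z : ℂ | z ≠ 0}) :
    ((∃ φ : ℂ → ℂ, DifferentiableOn ℂ φ {z : ℂ | z ≠ 0} ∧
        ∀ z : ℂ, z ≠ 0 → φ (q * z) - φ z = g z) ↔
      (1 / (2 * (Real.pi : ℂ) * Complex.I)) * (∮ z in C(0, 1), g z / z) = 0) ∧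
    ∀ φ φ' : ℂ → ℂ,
      DifferentiableOn ℂ φ {z : ℂ | z ≠ 0} →
      (∀ z : ℂ, z ≠ 0 → φ (q * z) - φ z = g z) →
      DifferentiableOn ℂ φ' {z : ℂ | z ≠ 0} →
      (∀ z : ℂ, z ≠ 0 → φ' (q * z) - φ' z = g z) →
      ∃ c : ℂ, ∀ z : ℂ, z ≠ 0 → φ' z = φ z + c := by
  rw [← circleAverage_eq_one_div_mul_circleIntegral_div g one_ne_zero]
  exact statement0_general (norm_pos_iff.1 hq0) hq1 hg
end

section
/- Let r > 0 and let g be holomorphic on the polydisc {(X,Y) ∈ ℂ² : |X| < r, |Y| < r} with g(0,0) = 0. Then for every c > 0, every ε ∈ (0, (π−ϖ)/2) and every n ∈ ℕ there exist R > 0 and K > 0 such that for every (z,ξ) ∈ ℂ* × ℂ with e^{−c} ≤ |z| ≤ e^{c}, |ξ| ≥ R and arg ξ ∈ [ε, π−ϖ−ε], the point Π(z,ξ) lies in the polydisc and |g(Π(z,ξ))| ≤ K/|ξ|ⁿ. -/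
open Complex

/-- The Serre map `Π(z,ξ) = (exp(2πiξ), z·exp(2πiτξ))`. -/
noncomputable def PiMap (τ : ℂ) (p : ℂ × ℂ) : ℂ × ℂ :=
  (Complex.exp (2 * (Real.pi : ℂ) * Complex.I * p.2),
   p.1 * Complex.exp (2 * (Real.pi : ℂ) * Complex.I * τ * p.2))

/-!
On the sector both `arg ξ` and `arg (τξ) = ϖ + arg ξ` stay in `[ε, π − ε]`, so `Im ξ` and `Im (τξ)`
are bounded below by positive multiples of `|ξ|`. Hence `Π(z,ξ)` tends to the origin exponentially
fast in `|ξ|`, uniformly for bounded `z`, and `g ∘ Π` inherits this decay because `g` is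
`O(|w|)` at the origin.
-/

theorem sin_le_sin_of_mem_Icc {ε θ : ℝ} (hε : 0 ≤ ε) (hθ : θ ∈ Set.Icc ε (Real.pi - ε)) :
    Real.sin ε ≤ Real.sin θ := by
  have hle : ε ≤ Real.pi - ε := hθ.1.trans hθ.2
  simpa only [Real.sin_pi_sub, min_self] using
    strictConcaveOn_sin_Icc.concaveOn.min_le_of_mem_Icc (x := ε) (y := Real.pi - ε)
      ⟨hε, by linarith⟩ ⟨by linarith, by linarith⟩ hθ

theorem sin_mul_norm_le_im {ε : ℝ} {w : ℂ} (hε : 0 ≤ ε)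
    (hw : arg w ∈ Set.Icc ε (Real.pi - ε)) : Real.sin ε * ‖w‖ ≤ w.im := by
  rw [← norm_mul_sin_arg w, mul_comm]
  gcongr
  exact sin_le_sin_of_mem_Icc hε hw

theorem norm_exp_two_pi_mul_I_mul (w : ℂ) :
    ‖exp (2 * (Real.pi : ℂ) * I * w)‖ = Real.exp (-(2 * Real.pi * w.im)) := by
  simpa [Function.Periodic.qParam] using Function.Periodic.norm_qParam 1 w

theorem exp_neg_le_factorial_div_pow {x : ℝ} (hx : 0 < x) (n : ℕ) :
    Real.exp (-x) ≤ n.factorial / x ^ n := by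
  rw [Real.exp_neg, ← inv_div]
  exact inv_anti₀ (by positivity) (Real.pow_div_factorial_le_exp x hx.le n)

theorem isBigO_id_of_differentiableAt_zero {𝕜 E F : Type*} [NontriviallyNormedField 𝕜]
    [NormedAddCommGroup E] [NormedSpace 𝕜 E] [NormedAddCommGroup F] [NormedSpace 𝕜 F] {f : E → F}
    (hf : DifferentiableAt 𝕜 f 0) (hf₀ : f 0 = 0) : f =O[nhds 0] fun x ↦ x := by
  simpa only [hf₀, sub_zero] using hf.isBigO_sub

theorem polydisc_mem_nhds_zero {r : ℝ} (hr : 0 < r) :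
    {w : ℂ × ℂ | ‖w.1‖ < r ∧ ‖w.2‖ < r} ∈ nhds 0 := by
  convert Metric.ball_mem_nhds (0 : ℂ × ℂ) hr
  simp [Set.ext_iff, Prod.norm_def]

namespace PiMap

/-- The closed sector of all `ξ` with `arg ξ ∈ [ε, π − ϖ − ε]`, where `ϖ = arg τ`; for `ε > 0` it
does not contain the origin, because `arg 0 = 0`. -/
def sector (τ : ℂ) (ε : ℝ) : Set ℂ :=
  {ξ | arg ξ ∈ Set.Icc ε (Real.pi - arg τ - ε)}

/-- The exponential rate at which `PiMap τ (z, ξ)` is shown to tend to `0` as `ξ` tends to infinity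
in `sector τ ε`. -/
noncomputable def decayRate (τ : ℂ) (ε : ℝ) : ℝ :=
  2 * Real.pi * (Real.sin ε * min 1 ‖τ‖)

variable {τ z ξ : ℂ} {ε : ℝ}

theorem norm_apply (τ z ξ : ℂ) :
    ‖PiMap τ (z, ξ)‖ =
      max (Real.exp (-(2 * Real.pi * ξ.im))) (‖z‖ * Real.exp (-(2 * Real.pi * (τ * ξ).im))) := by
  simp only [PiMap, Prod.norm_def, norm_mul, mul_assoc _ τ ξ, norm_exp_two_pi_mul_I_mul]

theorem sin_mul_norm_le_im_of_mem_sector (hτ : 0 ≤ τ.im) (hε : 0 ≤ ε) (hξ : ξ ∈ sector τ ε) :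
    Real.sin ε * ‖ξ‖ ≤ ξ.im := by
  have hargτ : 0 ≤ arg τ := arg_nonneg_iff.mpr hτ
  exact sin_mul_norm_le_im hε ⟨hξ.1, by linarith [hξ.2]⟩

theorem arg_mul_of_mem_sector (hτ₀ : τ ≠ 0) (hτ : 0 ≤ τ.im) (hε : 0 < ε) (hξ : ξ ∈ sector τ ε) :
    arg (τ * ξ) = arg τ + arg ξ := by
  have hargτ : 0 ≤ arg τ := arg_nonneg_iff.mpr hτ
  obtain ⟨hlower, hupper⟩ := hξ
  have hξ₀ : ξ ≠ 0 := by
    rintro rfl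
    linarith [arg_zero]
  exact arg_mul hτ₀ hξ₀ ⟨by linarith [Real.pi_pos], by linarith⟩

theorem sin_mul_norm_mul_le_im_mul_of_mem_sector (hτ₀ : τ ≠ 0) (hτ : 0 ≤ τ.im) (hε : 0 < ε)
    (hξ : ξ ∈ sector τ ε) : Real.sin ε * ‖τ * ξ‖ ≤ (τ * ξ).im := by
  have hargτ : 0 ≤ arg τ := arg_nonneg_iff.mpr hτ
  apply sin_mul_norm_le_im hε.le
  rw [arg_mul_of_mem_sector hτ₀ hτ hε hξ]
  exact ⟨by linarith [hξ.1], by linarith [hξ.2]⟩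

theorem decayRate_pos (hτ₀ : τ ≠ 0) (hε : 0 < ε) (hεπ : ε < Real.pi) : 0 < decayRate τ ε := by
  have hsin : 0 < Real.sin ε := Real.sin_pos_of_pos_of_lt_pi hε hεπ
  unfold decayRate
  positivity

theorem norm_le_of_mem_sector (hτ₀ : τ ≠ 0) (hτ : 0 ≤ τ.im) (hε : 0 < ε) (hεπ : ε < Real.pi)
    (hξ : ξ ∈ sector τ ε) :
    ‖PiMap τ (z, ξ)‖ ≤ max 1 ‖z‖ * Real.exp (-(decayRate τ ε * ‖ξ‖)) := by
  have hsin : 0 ≤ Real.sin ε := (Real.sin_pos_of_pos_of_lt_pi hε hεπ).le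
  have rate_le {a y : ℝ} (ha : min 1 ‖τ‖ ≤ a) (hy : Real.sin ε * (a * ‖ξ‖) ≤ y) :
      decayRate τ ε * ‖ξ‖ ≤ 2 * Real.pi * y :=
    calc decayRate τ ε * ‖ξ‖ = 2 * Real.pi * (Real.sin ε * (min 1 ‖τ‖ * ‖ξ‖)) := by
          unfold decayRate; ring
      _ ≤ 2 * Real.pi * (Real.sin ε * (a * ‖ξ‖)) := by gcongr
      _ ≤ 2 * Real.pi * y := by gcongr
  have him : decayRate τ ε * ‖ξ‖ ≤ 2 * Real.pi * ξ.im :=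
    rate_le (min_le_left _ _) (by
      simpa only [one_mul] using sin_mul_norm_le_im_of_mem_sector hτ hε.le hξ)
  have him_mul : decayRate τ ε * ‖ξ‖ ≤ 2 * Real.pi * (τ * ξ).im :=
    rate_le (min_le_right _ _) (by
      simpa only [norm_mul] using sin_mul_norm_mul_le_im_mul_of_mem_sector hτ₀ hτ hε hξ)
  rw [norm_apply, max_mul_of_nonneg _ _ (Real.exp_pos _).le, one_mul]
  gcongr

theorem exists_forall_of_eventually_nhds_zero (hτ₀ : τ ≠ 0) (hτ : 0 ≤ τ.im) (hε : 0 < ε)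
    (hεπ : ε < Real.pi) (M : ℝ) {p : ℂ × ℂ → Prop} (hp : ∀ᶠ w in nhds 0, p w) :
    ∃ R : ℝ, 0 < R ∧
      ∀ z ξ : ℂ, ‖z‖ ≤ M → R ≤ ‖ξ‖ → ξ ∈ sector τ ε → p (PiMap τ (z, ξ)) := by
  obtain ⟨δ, hδ, hpδ⟩ := Metric.eventually_nhds_iff.mp hp
  have htendsto : Filter.Tendsto (fun x ↦ max 1 M * Real.exp (-(decayRate τ ε * x)))
      Filter.atTop (nhds 0) := by
    simpa only [mul_zero, Function.comp_def, id] using Filter.Tendsto.const_mul (max 1 M)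
      (Real.tendsto_exp_neg_atTop_nhds_zero.comp
        (Filter.tendsto_id.const_mul_atTop (decayRate_pos hτ₀ hε hεπ)))
  obtain ⟨R, hR, hltδ⟩ :=
    (Filter.atTop_basis' 1).eventually_iff.mp (htendsto.eventually_lt_const hδ)
  refine ⟨R, by linarith, fun z ξ hz hRξ hξ ↦ hpδ ?_⟩
  calc dist (PiMap τ (z, ξ)) 0 = ‖PiMap τ (z, ξ)‖ := dist_zero_right _
    _ ≤ max 1 ‖z‖ * Real.exp (-(decayRate τ ε * ‖ξ‖)) := norm_le_of_mem_sector hτ₀ hτ hε hεπ hξ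
    _ ≤ max 1 M * Real.exp (-(decayRate τ ε * ‖ξ‖)) := by gcongr
    _ < δ := hltδ hRξ

end PiMap

theorem statement4_general {E : Type*} [SeminormedAddCommGroup E] {τ : ℂ} (hτ₀ : τ ≠ 0)
    (hτ : 0 ≤ τ.im) {U : Set (ℂ × ℂ)} (hU : U ∈ nhds 0) {g : ℂ × ℂ → E}
    (hg : g =O[nhds 0] fun w ↦ w) (M : ℝ) {ε : ℝ} (hε : 0 < ε) (hεπ : ε < Real.pi)
    (n : ℕ) :
    ∃ R K : ℝ, 0 < R ∧ 0 < K ∧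
      ∀ z ξ : ℂ, ‖z‖ ≤ M → R ≤ ‖ξ‖ → ξ ∈ PiMap.sector τ ε →
        PiMap τ (z, ξ) ∈ U ∧ ‖g (PiMap τ (z, ξ))‖ ≤ K / ‖ξ‖ ^ n := by
  obtain ⟨C, hC, hgC⟩ := hg.exists_pos
  obtain ⟨R, hR, hRp⟩ :=
    PiMap.exists_forall_of_eventually_nhds_zero hτ₀ hτ hε hεπ M
      ((Filter.eventually_mem_set.mpr hU).and hgC.bound)
  set s := PiMap.decayRate τ ε
  have hs : 0 < s := PiMap.decayRate_pos hτ₀ hε hεπ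
  refine ⟨R, C * (max 1 M * (n.factorial / s ^ n)), hR, by positivity, fun z ξ hz hRξ hξ ↦ ?_⟩
  obtain ⟨hmem, hgle⟩ := hRp z ξ hz hRξ hξ
  have hξ₀ : 0 < ‖ξ‖ := hR.trans_le hRξ
  refine ⟨hmem, ?_⟩
  calc ‖g (PiMap τ (z, ξ))‖ ≤ C * ‖PiMap τ (z, ξ)‖ := hgle
    _ ≤ C * (max 1 ‖z‖ * Real.exp (-(s * ‖ξ‖))) := by
      gcongr
      exact PiMap.norm_le_of_mem_sector hτ₀ hτ hε hεπ hξ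
    _ ≤ C * (max 1 M * (n.factorial / (s * ‖ξ‖) ^ n)) := by
      gcongr
      exact exp_neg_le_factorial_div_pow (by positivity) n
    _ = C * (max 1 M * (n.factorial / s ^ n)) / ‖ξ‖ ^ n := by
      rw [mul_pow]; field_simp

/-- if `g` is holomorphic on the polydisc `{|X| < r, |Y| < r}` and vanishes at
the origin, then `g ∘ Π` is flat (decays faster than any power of `1/|ξ|`) on the sectorial
domains `e^{−c} ≤ |z| ≤ e^c`, `|ξ| ≥ R`, `arg ξ ∈ [ε, π − ϖ − ε]`, where `ϖ = arg τ`. -/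
theorem statement4 (τ : ℂ) (hτ : 0 < τ.im) (r : ℝ) (hr : 0 < r)
    (g : ℂ × ℂ → ℂ)
    (hg : DifferentiableOn ℂ g {w : ℂ × ℂ | ‖w.1‖ < r ∧ ‖w.2‖ < r})
    (hg0 : g (0, 0) = 0) :
    ∀ c : ℝ, 0 < c → ∀ ε : ℝ, 0 < ε → ε < (Real.pi - Complex.arg τ) / 2 → ∀ n : ℕ,
      ∃ R K : ℝ, 0 < R ∧ 0 < K ∧
        ∀ z ξ : ℂ, z ≠ 0 →
          Real.exp (-c) ≤ ‖z‖ → ‖z‖ ≤ Real.exp c →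
          R ≤ ‖ξ‖ →
          ε ≤ Complex.arg ξ → Complex.arg ξ ≤ Real.pi - Complex.arg τ - ε →
          PiMap τ (z, ξ) ∈ {w : ℂ × ℂ | ‖w.1‖ < r ∧ ‖w.2‖ < r} ∧
          ‖g (PiMap τ (z, ξ))‖ ≤ K / ‖ξ‖ ^ n := by
  intro c _ ε hε hε_lt n
  have hτ₀ : τ ≠ 0 := by rintro rfl; simp at hτ
  have hεπ : ε < Real.pi := by linarith [arg_nonneg_iff.mpr hτ.le, Real.pi_pos]
  have hU := polydisc_mem_nhds_zero hr
  have hgO := isBigO_id_of_differentiableAt_zero (hg.differentiableAt hU) hg0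
  obtain ⟨R, K, hR, hK, h⟩ := statement4_general hτ₀ hτ.le hU hgO (Real.exp c) hε hεπ n
  exact ⟨R, K, hR, hK, fun z ξ _ _ hz hRξ hlower hupper ↦ h z ξ hz hRξ ⟨hlower, hupper⟩⟩
end

section
/- Let U ⊆ ℂ* × ℂ be an open set such that for every c > 0 and ε > 0 there exists R > 0 with S(c,ε,R) := {(z,ξ) ∈ ℂ* × ℂ : e^{−c} < |z| < e^{c}, |ξ| > R, arg ξ ∈ (ε, π−ϖ−ε)} ⊆ U. Let f : U → ℂ be holomorphic and bounded, and suppose f(q·z, ξ−1) = f(z,ξ) whenever both (z,ξ) ∈ U and (q·z, ξ−1) ∈ U. Then there exist r > 0 and a holomorphic function g on the polydisc {(X,Y) ∈ ℂ² : |X| < r, |Y| < r} such that for every c > 0 and ε > 0 there is R > 0 with f(z,ξ) = g(Π(z,ξ)) for all (z,ξ) ∈ S(c,ε,R). If moreover for every c > 0 and ε > 0 the supremum of |f| over S(c,ε,R) tends to 0 as R → ∞, then g(0,0) = 0. -/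
open Complex

/-- The sector `S(c,ε,R)` of directions `arg ξ ∈ (ε, π − ϖ − ε)`, `ϖ = arg τ`. -/
noncomputable def Ssector (τ : ℂ) (c ε R : ℝ) : Set (ℂ × ℂ) :=
  {p : ℂ × ℂ | p.1 ≠ 0 ∧ Real.exp (-c) < ‖p.1‖ ∧ ‖p.1‖ < Real.exp c ∧
    R < ‖p.2‖ ∧ ε < Complex.arg p.2 ∧
    Complex.arg p.2 < Real.pi - Complex.arg τ - ε}

/-!
In the logarithmic coordinates `w` with `Π (z, ξ) = (exp (2πi w.1), exp (2πi w.2))`, the invariance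
`f (qz, ξ - 1) = f (z, ξ)` makes `f` a doubly `1`-periodic function of `w`, holomorphic and bounded
at infinity on the tube over every cone around the diagonal of the first quadrant: restricting
`Im w` to such a cone is what bounding `arg ξ` away from `0` and `π - arg τ` means. The Laurent
coefficients of such a function do not depend on `Im w`, and the bound
`‖a k‖ ≤ M exp (2π ⟨k, Im w⟩)` along a ray on which `⟨k, Im w⟩ → -∞` kills the coefficients with a
negative index. What remains is a power series that converges on a polydisc.
-/

section PowerSeries

theorem differentiableOn_tsum_of_norm_le {ι E F : Type*} [NormedAddCommGroup E] [NormedSpace ℂ E]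
    [NormedAddCommGroup F] [NormedSpace ℂ F] [CompleteSpace F] {f : ι → E → F} {u : ι → ℝ}
    {U : Set E} (hU : IsOpen U) (hu : Summable u) (hf : ∀ i, DifferentiableOn ℂ (f i) U)
    (hfu : ∀ i, ∀ w ∈ U, ‖f i w‖ ≤ u i) :
    DifferentiableOn ℂ (fun w => ∑' i, f i w) U := by
  intro c hc
  obtain ⟨δ, hδ, hball⟩ := Metric.isOpen_iff.1 hU c hc
  have hsub {w : E} (hw : w ∈ Metric.ball c (δ / 2)) : Metric.ball w (δ / 2) ⊆ U :=
    (Metric.ball_subset_ball' (by linarith [Metric.mem_ball.1 hw])).trans hball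
  have hmem {w : E} (hw : w ∈ Metric.ball c (δ / 2)) : w ∈ U :=
    hsub hw (Metric.mem_ball_self (half_pos hδ))
  -- Cauchy's estimate turns the bound on the functions into a bound on their derivatives.
  have hderiv (i : ι) (w : E) (hw : w ∈ Metric.ball c (δ / 2)) :
      ‖fderiv ℂ (f i) w‖ ≤ 2 * u i / (δ / 2) := by
    refine norm_fderiv_le_div_of_mapsTo_ball ((hf i).mono (hsub hw)) (fun z hz => ?_) (half_pos hδ)
    rw [mem_closedBall_iff_norm]
    linarith [norm_sub_le (f i z) (f i w), hfu i z (hsub hw hz), hfu i w (hmem hw)]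
  refine (hasFDerivAt_tsum_of_isPreconnected ((hu.mul_left 2).div_const (δ / 2)) Metric.isOpen_ball
    (convex_ball c (δ / 2)).isPreconnected
    (fun i w hw => ((hf i).differentiableAt (hU.mem_nhds (hmem hw))).hasFDerivAt) hderiv
    (Metric.mem_ball_self (half_pos hδ)) (hu.of_norm_bounded fun i => hfu i c hc)
    (Metric.mem_ball_self (half_pos hδ))).differentiableAt.differentiableWithinAt

variable {a : ℕ × ℕ → ℂ} {M r s : ℝ}

theorem summable_prod_geometric {t : ℝ} (h₀ : 0 ≤ t) (h₁ : t < 1) :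
    Summable fun k : ℕ × ℕ => t ^ k.1 * t ^ k.2 :=
  (summable_geometric_of_lt_one h₀ h₁).mul_of_nonneg (summable_geometric_of_lt_one h₀ h₁)
    (fun _ => pow_nonneg h₀ _) fun _ => pow_nonneg h₀ _

theorem norm_monomial_le_of_norm_le (hr : 0 < r) (ha : ∀ k, ‖a k‖ * (r ^ k.1 * r ^ k.2) ≤ M)
    {x y : ℂ} (hx : ‖x‖ ≤ s) (hy : ‖y‖ ≤ s) (k : ℕ × ℕ) :
    ‖a k * (x ^ k.1 * y ^ k.2)‖ ≤ M * ((s / r) ^ k.1 * (s / r) ^ k.2) := by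
  have hs : 0 ≤ s := (norm_nonneg x).trans hx
  calc ‖a k * (x ^ k.1 * y ^ k.2)‖ = ‖a k‖ * (‖x‖ ^ k.1 * ‖y‖ ^ k.2) := by
        rw [norm_mul, norm_mul, norm_pow, norm_pow]
    _ ≤ ‖a k‖ * (s ^ k.1 * s ^ k.2) := by gcongr
    _ = ‖a k‖ * (r ^ k.1 * r ^ k.2) * ((s / r) ^ k.1 * (s / r) ^ k.2) := by
        simp only [div_pow]; field_simp
    _ ≤ M * ((s / r) ^ k.1 * (s / r) ^ k.2) := by gcongr; exact ha k

theorem summable_doublePowerSeries (hr : 0 < r) (ha : ∀ k, ‖a k‖ * (r ^ k.1 * r ^ k.2) ≤ M)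
    {x y : ℂ} (hx : ‖x‖ < r) (hy : ‖y‖ < r) :
    Summable fun k : ℕ × ℕ => a k * (x ^ k.1 * y ^ k.2) :=
  .of_norm_bounded
    ((summable_prod_geometric (by positivity) ((div_lt_one hr).2 (max_lt hx hy))).mul_left M)
    (norm_monomial_le_of_norm_le hr ha (le_max_left ‖x‖ ‖y‖) (le_max_right ‖x‖ ‖y‖))

theorem isOpen_polydisc (r : ℝ) : IsOpen {w : ℂ × ℂ | ‖w.1‖ < r ∧ ‖w.2‖ < r} :=
  (isOpen_lt continuous_fst.norm continuous_const).and
    (isOpen_lt continuous_snd.norm continuous_const)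

theorem differentiableOn_doublePowerSeries (hr : 0 < r)
    (ha : ∀ k, ‖a k‖ * (r ^ k.1 * r ^ k.2) ≤ M) :
    DifferentiableOn ℂ (fun w : ℂ × ℂ => ∑' k : ℕ × ℕ, a k * (w.1 ^ k.1 * w.2 ^ k.2))
      {w | ‖w.1‖ < r ∧ ‖w.2‖ < r} := by
  intro w hw
  obtain ⟨s, hws, hsr⟩ := exists_between (max_lt hw.1 hw.2)
  have hs : 0 ≤ s := (le_max_of_le_left (norm_nonneg _)).trans hws.le
  exact ((differentiableOn_tsum_of_norm_le (isOpen_polydisc s)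
    ((summable_prod_geometric (by positivity) ((div_lt_one hr).2 hsr)).mul_left M)
    (fun k => by fun_prop)
    fun k v hv => norm_monomial_le_of_norm_le hr ha hv.1.le hv.2.le k).differentiableAt
    ((isOpen_polydisc s).mem_nhds (max_lt_iff.1 hws))).differentiableWithinAt

end PowerSeries

local notation "𝕢" => Function.Periodic.qParam 1

section LaurentCoefficients

open Function.Periodic (qParam_ne_zero differentiable_qParam continuous_qParam norm_qParam)

theorem qParam_add (h : ℝ) (z w : ℂ) :
    Function.Periodic.qParam h (z + w) =
      Function.Periodic.qParam h z * Function.Periodic.qParam h w := by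
  simp only [Function.Periodic.qParam, ← exp_add, mul_add, add_div]

theorem qParam_one_apply (z : ℂ) : 𝕢 z = exp (2 * Real.pi * I * z) := by
  simp [Function.Periodic.qParam]

theorem qParam_one_intCast (n : ℤ) : 𝕢 n = 1 := by
  rw [qParam_one_apply, mul_comm, exp_int_mul_two_pi_mul_I]

theorem qParam_one_periodic : Function.Periodic 𝕢 1 := fun z => by
  have h1 : 𝕢 1 = 1 := mod_cast qParam_one_intCast 1
  rw [qParam_add, h1, mul_one]

theorem continuous_qParam_one_zpow (m : ℤ) : Continuous fun z => 𝕢 z ^ m :=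
  continuous_qParam.zpow₀ m fun z => .inl (qParam_ne_zero z)

theorem norm_qParam_one_zpow (z : ℂ) (m : ℤ) :
    ‖𝕢 z ^ m‖ = Real.exp (-(2 * Real.pi * (m * z.im))) := by
  rw [norm_zpow, norm_qParam, ← Real.rpow_intCast, ← Real.exp_mul]
  ring_nf

theorem qParam_one_ofReal_zpow (x : ℝ) (m : ℤ) :
    𝕢 x ^ m = fourier m (x : AddCircle (1 : ℝ)) := by
  rw [fourier_coe_apply, qParam_one_apply, ← exp_int_mul]
  congr 1
  push_cast
  ring

/-- The `m`-th Laurent coefficient of the `1`-periodic function `h`, as a function of `𝕢 z`, on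
the circle `‖𝕢 z‖ = exp (-2πt)`. -/
noncomputable def lineCoeff (h : ℂ → ℂ) (m : ℤ) (t : ℝ) : ℂ :=
  ∫ x in (0 : ℝ)..1, h (x + t * I) * 𝕢 (x + t * I) ^ (-m)

section OneVariable

variable {h : ℂ → ℂ}

theorem norm_lineCoeff_le {t M : ℝ} (hM : ∀ z : ℂ, z.im = t → ‖h z‖ ≤ M) (m : ℤ) :
    ‖lineCoeff h m t‖ ≤ M * Real.exp (2 * Real.pi * (m * t)) := by
  refine (intervalIntegral.norm_integral_le_of_norm_le_const fun x _ => ?_).trans_eq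
    (by rw [sub_zero, abs_one, mul_one])
  rw [norm_mul, norm_qParam_one_zpow]
  refine mul_le_mul (hM _ (by simp)) (Real.exp_le_exp.2 (by simp)) (Real.exp_pos _).le ?_
  exact (norm_nonneg _).trans (hM (t * I) (by simp))

theorem lineCoeff_eq_of_differentiableAt (hper : Function.Periodic h 1) {t t' : ℝ}
    (hd : ∀ z : ℂ, z.im ∈ Set.uIcc t t' → DifferentiableAt ℂ h z) (m : ℤ) :
    lineCoeff h m t = lineCoeff h m t' := by
  let φ : ℂ → ℂ := fun z => h z * 𝕢 z ^ (-m)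
  have hφ : ∀ z : ℂ, z.im ∈ Set.uIcc t t' → DifferentiableAt ℂ φ z := fun z hz =>
    (hd z hz).mul (differentiable_qParam.differentiableAt.zpow
      (.inl (qParam_ne_zero z)))
  have hsides (y : ℝ) : φ (1 + y * I) = φ (y * I) := by
    simp only [φ, add_comm (1 : ℂ), hper _, qParam_one_periodic _]
  have hrect := integral_boundary_rect_eq_zero_of_differentiableOn φ ⟨0, t⟩ ⟨1, t'⟩
    fun z hz => (hφ z (by simpa using hz.2)).differentiableWithinAt
  simp only [ofReal_zero, ofReal_one, zero_add, hsides, add_sub_cancel_right] at hrect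
  exact sub_eq_zero.1 hrect

theorem hasSum_lineCoeff (hper : Function.Periodic h 1) (z : ℂ)
    (hc : Continuous fun x : ℝ => h (x + z.im * I))
    (hs : Summable fun m : ℤ => lineCoeff h m z.im * 𝕢 z ^ m) :
    HasSum (fun m : ℤ => lineCoeff h m z.im * 𝕢 z ^ m) (h z) := by
  have hline : Function.Periodic (fun x : ℝ => h (x + z.im * I)) 1 := fun x => by
    simp only [ofReal_add, ofReal_one, add_right_comm, hper _]
  have : Fact ((0 : ℝ) < 1) := ⟨one_pos⟩
  let H : C(AddCircle (1 : ℝ), ℂ) := ⟨hline.lift, continuous_coinduced_dom.2 hc⟩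
  have hcoeff (m : ℤ) : lineCoeff h m z.im = fourierCoeff H m * 𝕢 (z.im * I) ^ (-m) := by
    rw [fourierCoeff_eq_intervalIntegral H m 0, div_one, one_smul, zero_add,
      ← intervalIntegral.integral_mul_const]
    refine intervalIntegral.integral_congr fun x _ => ?_
    simp only [smul_eq_mul, qParam_add, mul_zpow, qParam_one_ofReal_zpow]
    rw [← mul_assoc, mul_comm (h _)]
    rfl
  have hterm (m : ℤ) : lineCoeff h m z.im * 𝕢 z ^ m =
      fourierCoeff H m • fourier m (z.re : AddCircle (1 : ℝ)) := by
    nth_rw 2 [← re_add_im z]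
    rw [hcoeff, ← qParam_one_ofReal_zpow, smul_eq_mul, qParam_add, mul_zpow, zpow_neg]
    have := zpow_ne_zero m (qParam_ne_zero (h := 1) (z.im * I))
    field
  simp only [hterm] at hs ⊢
  have hsum : Summable (fourierCoeff H) := .of_norm <| by
    simpa only [norm_smul, fourier_apply, Circle.norm_coe, mul_one] using hs.norm
  simpa [H] using has_pointwise_sum_fourier_series_of_summable hsum (z.re : AddCircle (1 : ℝ))

end OneVariable

section TwoVariables

variable {F : ℂ × ℂ → ℂ}

/-- The Laurent coefficient with exponents `k` of the doubly `1`-periodic function `F`, as a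
function of `(𝕢 w.1, 𝕢 w.2)`, on the torus where `w` has imaginary part `p`. -/
noncomputable def laurentCoeff (F : ℂ × ℂ → ℂ) (k : ℤ × ℤ) (p : ℝ × ℝ) : ℂ :=
  lineCoeff (fun η => lineCoeff (fun ξ => F (ξ, η)) k.1 p.1) k.2 p.2

theorem norm_laurentCoeff_le {p : ℝ × ℝ} {M : ℝ}
    (hM : ∀ w : ℂ × ℂ, (w.1.im, w.2.im) = p → ‖F w‖ ≤ M) (k : ℤ × ℤ) :
    ‖laurentCoeff F k p‖ ≤ M * Real.exp (2 * Real.pi * (k.1 * p.1 + k.2 * p.2)) := by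
  refine (norm_lineCoeff_le (fun η hη => norm_lineCoeff_le (fun ξ hξ =>
    hM (ξ, η) (Prod.ext hξ hη)) k.1) k.2).trans_eq ?_
  rw [mul_assoc, ← Real.exp_add, mul_add]

theorem lineCoeff_comm {s t : ℝ}
    (hF : Continuous fun x : ℝ × ℝ => F (x.1 + s * I, x.2 + t * I)) (m n : ℤ) :
    lineCoeff (fun η => lineCoeff (fun ξ => F (ξ, η)) m s) n t =
      lineCoeff (fun ξ => lineCoeff (fun η => F (ξ, η)) n t) m s := by
  have hint : Continuous fun x : ℝ × ℝ =>
      F (x.2 + s * I, x.1 + t * I) * 𝕢 (x.2 + s * I) ^ (-m) * 𝕢 (x.1 + t * I) ^ (-n) :=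
    ((hF.comp continuous_swap).mul ((continuous_qParam_one_zpow _).comp (by fun_prop))).mul
      ((continuous_qParam_one_zpow _).comp (by fun_prop))
  simp only [lineCoeff, ← intervalIntegral.integral_mul_const]
  rw [MeasureTheory.intervalIntegral_intervalIntegral_swap]
  · simp only [mul_right_comm]
  · exact (hint.continuousOn.integrableOn_compact (isCompact_uIcc.prod isCompact_uIcc)).mono_set
      (Set.prod_mono Set.uIoc_subset_uIcc Set.uIoc_subset_uIcc)

theorem continuous_lineCoeff {s t : ℝ}
    (hF : Continuous fun x : ℝ × ℝ => F (x.1 + s * I, x.2 + t * I)) (m : ℤ) :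
    Continuous fun y : ℝ => lineCoeff (fun ξ => F (ξ, y + t * I)) m s := by
  refine intervalIntegral.continuous_parametric_intervalIntegral_of_continuous' ?_ 0 1
  exact (hF.comp continuous_swap).mul ((continuous_qParam_one_zpow _).comp (by fun_prop))

theorem periodic_lineCoeff (hper : Function.Periodic F (0, 1)) (m : ℤ) (t : ℝ) :
    Function.Periodic (fun η => lineCoeff (fun ξ => F (ξ, η)) m t) 1 := fun η => by
  have hη (ξ : ℂ) : F (ξ, η + 1) = F (ξ, η) := by simpa using hper (ξ, η)
  simp only [hη]

theorem hasSum_laurentCoeff (hper₁ : Function.Periodic F (1, 0))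
    (hper₂ : Function.Periodic F (0, 1)) (w : ℂ × ℂ)
    (hc : Continuous fun x : ℝ × ℝ => F (x.1 + w.1.im * I, x.2 + w.2.im * I))
    (hs : Summable fun k : ℤ × ℤ =>
      laurentCoeff F k (w.1.im, w.2.im) * (𝕢 w.1 ^ k.1 * 𝕢 w.2 ^ k.2)) :
    HasSum (fun k : ℤ × ℤ => laurentCoeff F k (w.1.im, w.2.im) * (𝕢 w.1 ^ k.1 * 𝕢 w.2 ^ k.2))
      (F w) := by
  let A : ℤ → ℂ → ℂ := fun m η => lineCoeff (fun ξ => F (ξ, η)) m w.1.im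
  have hrow (m : ℤ) : HasSum
      (fun n : ℤ => laurentCoeff F (m, n) (w.1.im, w.2.im) * (𝕢 w.1 ^ m * 𝕢 w.2 ^ n))
      (A m w.2 * 𝕢 w.1 ^ m) := by
    have hfactor (n : ℤ) : laurentCoeff F (m, n) (w.1.im, w.2.im) * (𝕢 w.1 ^ m * 𝕢 w.2 ^ n) =
        lineCoeff (A m) n w.2.im * 𝕢 w.2 ^ n * 𝕢 w.1 ^ m := by
      rw [mul_comm (𝕢 w.1 ^ m), ← mul_assoc]
      rfl
    have hsm := hs.prod_factor m
    simp only [hfactor] at hsm ⊢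
    rw [summable_mul_right_iff (zpow_ne_zero m (qParam_ne_zero _))] at hsm
    exact (hasSum_lineCoeff (periodic_lineCoeff hper₂ m _) w.2
      (continuous_lineCoeff hc m) hsm).mul_right _
  have htotal := hs.hasSum.prod_fiberwise hrow
  have hline : HasSum (fun m : ℤ => A m w.2 * 𝕢 w.1 ^ m) (F w) := by
    refine hasSum_lineCoeff (h := fun ξ => F (ξ, w.2)) (fun ξ => ?_) w.1 ?_ htotal.summable
    · simpa using hper₁ (ξ, w.2)
    · simpa only [re_add_im] using hc.comp' (Continuous.prodMk_left w.2.re)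
  exact htotal.unique hline ▸ hs.hasSum

theorem laurentCoeff_eq_of_differentiableAt (hper₁ : Function.Periodic F (1, 0))
    (hper₂ : Function.Periodic F (0, 1)) {p p' : ℝ × ℝ}
    (hd : ∀ w : ℂ × ℂ, (w.1.im, w.2.im) ∈ Set.uIcc p p' → DifferentiableAt ℂ F w) (k : ℤ × ℤ) :
    laurentCoeff F k p = laurentCoeff F k p' := by
  rw [Set.uIcc_prod_eq] at hd
  have hcont {s t : ℝ} (hs : s ∈ Set.uIcc p.1 p'.1) (ht : t ∈ Set.uIcc p.2 p'.2) :
      Continuous fun x : ℝ × ℝ => F (x.1 + s * I, x.2 + t * I) :=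
    continuous_iff_continuousAt.2 fun x => ContinuousAt.comp' (g := F)
      (hd _ (Set.mk_mem_prod (by simpa using hs) (by simpa using ht))).continuousAt (by fun_prop)
  have hfst : laurentCoeff F k p = laurentCoeff F k (p'.1, p.2) := by
    refine intervalIntegral.integral_congr fun y _ => congrArg (· * _) ?_
    refine lineCoeff_eq_of_differentiableAt (fun ξ => ?_) (fun ξ hξ => ?_) k.1
    · simpa using hper₁ (ξ, y + p.2 * I)
    · exact (hd (ξ, y + p.2 * I) ⟨hξ, by simp⟩).comp ξ (by fun_prop)
  have hsnd : lineCoeff (fun ξ => lineCoeff (fun η => F (ξ, η)) k.2 p.2) k.1 p'.1 =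
      lineCoeff (fun ξ => lineCoeff (fun η => F (ξ, η)) k.2 p'.2) k.1 p'.1 := by
    refine intervalIntegral.integral_congr fun x _ => congrArg (· * _) ?_
    refine lineCoeff_eq_of_differentiableAt (fun η => ?_) (fun η hη => ?_) k.2
    · simpa using hper₂ (x + p'.1 * I, η)
    · exact (hd (x + p'.1 * I, η) ⟨by simp, hη⟩).comp η (by fun_prop)
  calc laurentCoeff F k p = laurentCoeff F k (p'.1, p.2) := hfst
    _ = lineCoeff (fun ξ => lineCoeff (fun η => F (ξ, η)) k.2 p.2) k.1 p'.1 :=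
      lineCoeff_comm (hcont Set.right_mem_uIcc Set.left_mem_uIcc) k.1 k.2
    _ = lineCoeff (fun ξ => lineCoeff (fun η => F (ξ, η)) k.2 p'.2) k.1 p'.1 := hsnd
    _ = laurentCoeff F k p' :=
      (lineCoeff_comm (hcont Set.right_mem_uIcc Set.right_mem_uIcc) k.1 k.2).symm

theorem eventually_uIcc_subset_of_mem_nhds {α β : Type*} [LinearOrder α] [TopologicalSpace α]
    [OrderTopology α] [LinearOrder β] [TopologicalSpace β] [OrderTopology β] {p : α × β}
    {W : Set (α × β)} (hW : W ∈ nhds p) : ∀ᶠ p' in nhds p, Set.uIcc p p' ⊆ W := by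
  rw [nhds_prod_eq] at hW ⊢
  obtain ⟨u, hu, v, hv, huv⟩ := Filter.mem_prod_iff.1 hW
  have hu' : ∀ᶠ x in nhds p.1, Set.uIcc p.1 x ⊆ u :=
    Filter.tendsto_smallSets_iff.1 (tendsto_const_nhds.uIcc Filter.tendsto_id) u hu
  have hv' : ∀ᶠ y in nhds p.2, Set.uIcc p.2 y ⊆ v :=
    Filter.tendsto_smallSets_iff.1 (tendsto_const_nhds.uIcc Filter.tendsto_id) v hv
  filter_upwards [hu'.prod_mk hv'] with p' hp'
  rw [Set.uIcc_prod_eq]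
  exact (Set.prod_mono hp'.1 hp'.2).trans huv

theorem laurentCoeff_eq_of_isPreconnected (hper₁ : Function.Periodic F (1, 0))
    (hper₂ : Function.Periodic F (0, 1)) {W : Set (ℝ × ℝ)} (hW : IsOpen W)
    (hWc : IsPreconnected W)
    (hd : ∀ w : ℂ × ℂ, (w.1.im, w.2.im) ∈ W → DifferentiableAt ℂ F w) (k : ℤ × ℤ)
    {p p' : ℝ × ℝ} (hp : p ∈ W) (hp' : p' ∈ W) : laurentCoeff F k p = laurentCoeff F k p' := by
  refine hWc.induction₂ (fun p p' => laurentCoeff F k p = laurentCoeff F k p') (fun p hp => ?_)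
    (fun _ _ _ _ _ _ => Eq.trans) (fun _ _ _ _ => Eq.symm) hp hp'
  filter_upwards [nhdsWithin_le_nhds (eventually_uIcc_subset_of_mem_nhds (hW.mem_nhds hp))]
    with p' hp'
  exact laurentCoeff_eq_of_differentiableAt hper₁ hper₂ (fun w hw => hd w (hp' hw)) k

end TwoVariables

end LaurentCoefficients

section Cones

open Filter Set Topology

/-- The symmetric open cone around the diagonal of the first quadrant bounded by the lines of
slopes `K⁻¹` and `K`. -/
def quadrantCone (K : ℝ) : Set (ℝ × ℝ) :=
  {p | p.1 < K * p.2 ∧ p.2 < K * p.1}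

/-- The filter of points of the first quadrant going to infinity inside `quadrantCone K`. -/
def coneAtTop (K : ℝ) : Filter (ℝ × ℝ) :=
  atTop ⊓ 𝓟 (quadrantCone K)

theorem coneAtTop_hasBasis (K : ℝ) :
    (coneAtTop K).HasBasis (fun _ : ℝ => True) fun T => Ioi T ×ˢ Ioi T ∩ quadrantCone K := by
  rw [coneAtTop, ← prod_atTop_atTop_eq]
  exact ((atTop_basis_Ioi (α := ℝ)).prod_self).inf_principal _

theorem isOpen_truncatedCone (K T : ℝ) : IsOpen (Ioi T ×ˢ Ioi T ∩ quadrantCone K) :=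
  (isOpen_Ioi.prod isOpen_Ioi).inter <|
    (isOpen_lt continuous_fst (continuous_const.mul continuous_snd)).and
      (isOpen_lt continuous_snd (continuous_const.mul continuous_fst))

theorem convex_quadrantCone (K : ℝ) : Convex ℝ (quadrantCone K) := by
  have h := (convex_halfSpace_lt (LinearMap.fst ℝ ℝ ℝ - K • LinearMap.snd ℝ ℝ ℝ).isLinear 0).inter
    (convex_halfSpace_lt (LinearMap.snd ℝ ℝ ℝ - K • LinearMap.fst ℝ ℝ ℝ).isLinear 0)
  simp only [LinearMap.sub_apply, LinearMap.smul_apply, LinearMap.fst_apply, LinearMap.snd_apply,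
    smul_eq_mul, sub_neg] at h
  exact h

theorem isPreconnected_truncatedCone (K T : ℝ) :
    IsPreconnected (Ioi T ×ˢ Ioi T ∩ quadrantCone K) :=
  (((convex_Ioi T).prod (convex_Ioi T)).inter (convex_quadrantCone K)).isPreconnected

theorem eventually_gt_coneAtTop (K T : ℝ) : ∀ᶠ p in coneAtTop K, T < p.1 ∧ T < p.2 :=
  (coneAtTop_hasBasis K).eventually_iff.2 ⟨T, trivial, fun _ hp => hp.1⟩

theorem coneAtTop_mono {K K' : ℝ} (h : K ≤ K') : coneAtTop K ≤ coneAtTop K' := by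
  refine le_inf inf_le_left (le_principal_iff.2 ?_)
  filter_upwards [eventually_gt_coneAtTop K 0, mem_inf_of_right (mem_principal_self _)]
    with p hpos hp
  exact ⟨hp.1.trans_le (by gcongr; exact hpos.2.le), hp.2.trans_le (by gcongr; exact hpos.1.le)⟩

theorem tendsto_ray_coneAtTop {K x y : ℝ} (hx : 0 < x) (hy : 0 < y) (hxy : x < K * y)
    (hyx : y < K * x) : Tendsto (fun s : ℝ => (s * x, s * y)) atTop (coneAtTop K) := by
  refine tendsto_inf.2 ⟨?_, tendsto_principal.2 ?_⟩
  · rw [← prod_atTop_atTop_eq]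
    exact (tendsto_id.atTop_mul_const hx).prodMk (tendsto_id.atTop_mul_const hy)
  · filter_upwards [eventually_gt_atTop 0] with s hs
    exact ⟨by nlinarith, by nlinarith⟩

theorem neBot_coneAtTop {K : ℝ} (hK : 1 < K) : (coneAtTop K).NeBot :=
  (tendsto_ray_coneAtTop one_pos one_pos (by linarith) (by linarith)).neBot

/-- The filter on `ℂ × ℂ` of points whose pair of imaginary parts goes to infinity inside
`quadrantCone K`. -/
def tubeAtTop (K : ℝ) : Filter (ℂ × ℂ) :=
  comap (fun w => (w.1.im, w.2.im)) (coneAtTop K)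

theorem eventually_gt_tubeAtTop (K T : ℝ) : ∀ᶠ w in tubeAtTop K, T < w.1.im ∧ T < w.2.im :=
  (eventually_gt_coneAtTop K T).comap _

theorem eventually_eventually_nhds_tubeAtTop {K : ℝ} {P : ℂ × ℂ → Prop}
    (h : ∀ᶠ w in tubeAtTop K, P w) : ∀ᶠ w in tubeAtTop K, ∀ᶠ w' in 𝓝 w, P w' := by
  have hbasis := (coneAtTop_hasBasis K).comap fun w : ℂ × ℂ => (w.1.im, w.2.im)
  obtain ⟨T, -, hT⟩ := hbasis.eventually_iff.1 h
  refine hbasis.eventually_iff.2 ⟨T, trivial, fun w hw => ?_⟩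
  filter_upwards [((isOpen_truncatedCone K T).preimage (by fun_prop)).mem_nhds hw] with w' hw'
  exact hT hw'

/-- The exponential map from a tube to its quotient by the real periods. -/
noncomputable def expPair (w : ℂ × ℂ) : ℂ × ℂ :=
  (𝕢 w.1, 𝕢 w.2)

theorem tendsto_expPair_tubeAtTop (K : ℝ) : Tendsto expPair (tubeAtTop K) (𝓝 (0, 0)) := by
  have hq : Tendsto 𝕢 (comap im atTop) (𝓝 0) :=
    (Function.Periodic.qParam_tendsto one_pos).mono_right nhdsWithin_le_nhds
  have hcone : Tendsto (fun w : ℂ × ℂ => (w.1.im, w.2.im)) (tubeAtTop K) (atTop ×ˢ atTop) := by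
    rw [prod_atTop_atTop_eq]
    exact tendsto_comap.mono_right inf_le_left
  exact (hq.comp (tendsto_comap_iff.2 (tendsto_fst.comp hcone))).prodMk_nhds
    (hq.comp (tendsto_comap_iff.2 (tendsto_snd.comp hcone)))

end Cones

section TubeTheorem

open Filter Set Topology

variable {F : ℂ × ℂ → ℂ}

theorem exists_laurentCoeff_eventually_eq (hper₁ : Function.Periodic F (1, 0))
    (hper₂ : Function.Periodic F (0, 1)) {K : ℝ} (hK : 1 < K)
    (hd : ∀ᶠ w in tubeAtTop K, DifferentiableAt ℂ F w) :
    ∃ a : ℤ × ℤ → ℂ, ∀ᶠ p in coneAtTop K, ∀ k, laurentCoeff F k p = a k := by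
  obtain ⟨T, -, hT⟩ := (coneAtTop_hasBasis K).eventually_iff.1 (eventually_comap.1 hd)
  have hmem := (coneAtTop_hasBasis K).mem_of_mem (i := T) trivial
  have := neBot_coneAtTop hK
  obtain ⟨p₀, hp₀⟩ := (coneAtTop K).nonempty_of_mem hmem
  refine ⟨fun k => laurentCoeff F k p₀, ?_⟩
  filter_upwards [hmem] with p hp k
  exact laurentCoeff_eq_of_isPreconnected hper₁ hper₂ (isOpen_truncatedCone K T)
    (isPreconnected_truncatedCone K T) (fun w hw => hT hw w rfl) k hp hp₀

theorem exists_forall_laurentCoeff_eventually_eq (hper₁ : Function.Periodic F (1, 0))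
    (hper₂ : Function.Periodic F (0, 1))
    (hd : ∀ K, 1 < K → ∀ᶠ w in tubeAtTop K, DifferentiableAt ℂ F w) :
    ∃ a : ℤ × ℤ → ℂ, ∀ K, 1 < K → ∀ᶠ p in coneAtTop K, ∀ k, laurentCoeff F k p = a k := by
  obtain ⟨a, ha⟩ := exists_laurentCoeff_eventually_eq hper₁ hper₂ one_lt_two (hd 2 one_lt_two)
  refine ⟨a, fun K hK => ?_⟩
  have hK' : 1 < max K 2 := lt_max_of_lt_left hK
  obtain ⟨b, hb⟩ := exists_laurentCoeff_eventually_eq hper₁ hper₂ hK' (hd _ hK')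
  have := neBot_coneAtTop one_lt_two
  obtain ⟨p, hpa, hpb⟩ := (ha.and (hb.filter_mono (coneAtTop_mono (le_max_right K 2)))).exists
  have hba : b = a := funext fun k => (hpb k).symm.trans (hpa k)
  exact hba ▸ hb.filter_mono (coneAtTop_mono (le_max_left K 2))

theorem exists_pos_pairing_neg {k : ℤ × ℤ} (hk : k.1 < 0 ∨ k.2 < 0) :
    ∃ x y : ℝ, 0 < x ∧ 0 < y ∧ k.1 * x + k.2 * y < 0 := by
  have hrow {m n : ℤ} (hm : m < 0) : (m : ℝ) * (|(n : ℝ)| + 1) + n * 1 < 0 := by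
    have hm' : (m : ℝ) ≤ -1 := by exact_mod_cast Int.le_sub_one_of_lt hm
    nlinarith [le_abs_self (n : ℝ), abs_nonneg (n : ℝ)]
  rcases hk with hk | hk
  · exact ⟨_, _, by positivity, one_pos, hrow hk⟩
  · exact ⟨_, _, one_pos, by positivity, (add_comm _ _).trans_lt (hrow hk)⟩

theorem eq_zero_of_eventually_norm_le_exp {E : Type*} [NormedAddCommGroup E] {a : E} {k : ℤ × ℤ}
    (hk : k.1 < 0 ∨ k.2 < 0)
    (ha : ∀ K, 1 < K → ∃ M : ℝ, ∀ᶠ p in coneAtTop K,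
      ‖a‖ ≤ M * Real.exp (2 * Real.pi * (k.1 * p.1 + k.2 * p.2))) : a = 0 := by
  obtain ⟨x, y, hx, hy, hxy⟩ := exists_pos_pairing_neg hk
  have hK : 1 < x / y + y / x + 1 := by linarith [div_pos hx hy, div_pos hy hx]
  obtain ⟨M, hM⟩ := ha _ hK
  have hray : Tendsto (fun s : ℝ => (s * x, s * y)) atTop (coneAtTop (x / y + y / x + 1)) :=
    tendsto_ray_coneAtTop hx hy
      (by rw [← div_lt_iff₀ hy]; linarith [div_pos hy hx])
      (by rw [← div_lt_iff₀ hx]; linarith [div_pos hx hy])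
  have hlin : Tendsto (fun s : ℝ => 2 * Real.pi * (k.1 * (s * x) + k.2 * (s * y))) atTop atBot := by
    have hneg : 2 * Real.pi * (k.1 * x + k.2 * y) < 0 :=
      mul_neg_of_pos_of_neg Real.two_pi_pos hxy
    refine (tendsto_id.atTop_mul_const_of_neg hneg).congr fun s => ?_
    simp only [id]
    ring
  have hlim : Tendsto (fun s : ℝ => M * Real.exp (2 * Real.pi * (k.1 * (s * x) + k.2 * (s * y))))
      atTop (𝓝 0) := by
    simpa using (Real.tendsto_exp_atBot.comp hlin).const_mul M
  exact norm_le_zero_iff.1 (ge_of_tendsto hlim (hray.eventually hM))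

theorem hasSum_expPair_of_laurentCoeff_eq (hper₁ : Function.Periodic F (1, 0))
    (hper₂ : Function.Periodic F (0, 1)) {a : ℤ × ℤ → ℂ}
    (ha : ∀ k : ℤ × ℤ, k.1 < 0 ∨ k.2 < 0 → a k = 0) {w : ℂ × ℂ}
    (hd : ∀ w' : ℂ × ℂ, (w'.1.im, w'.2.im) = (w.1.im, w.2.im) → ContinuousAt F w')
    (hcoeff : ∀ k, laurentCoeff F k (w.1.im, w.2.im) = a k)
    (hs : Summable fun k : ℕ × ℕ => a (k.1, k.2) * ((expPair w).1 ^ k.1 * (expPair w).2 ^ k.2)) :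
    HasSum (fun k : ℕ × ℕ => a (k.1, k.2) * ((expPair w).1 ^ k.1 * (expPair w).2 ^ k.2))
      (F w) := by
  let ι : ℕ × ℕ → ℤ × ℤ := Prod.map Nat.cast Nat.cast
  have hι : Function.Injective ι := Nat.cast_injective.prodMap Nat.cast_injective
  let φ : ℤ × ℤ → ℂ := fun k =>
    laurentCoeff F k (w.1.im, w.2.im) * (𝕢 w.1 ^ k.1 * 𝕢 w.2 ^ k.2)
  have hzero (k : ℤ × ℤ) (hk : k ∉ range ι) : φ k = 0 := by
    have hneg : k.1 < 0 ∨ k.2 < 0 := by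
      by_contra! hnonneg
      exact hk ⟨(k.1.toNat, k.2.toNat), Prod.ext (Int.toNat_of_nonneg hnonneg.1)
        (Int.toNat_of_nonneg hnonneg.2)⟩
    simp only [φ, hcoeff, ha k hneg, zero_mul]
  have hφι : φ ∘ ι = fun k : ℕ × ℕ =>
      a (k.1, k.2) * ((expPair w).1 ^ k.1 * (expPair w).2 ^ k.2) := by
    ext ⟨m, n⟩
    simp [φ, ι, hcoeff, expPair]
  rw [← hφι] at hs ⊢
  refine (hι.hasSum_iff hzero).2 (hasSum_laurentCoeff hper₁ hper₂ w ?_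
    ((hι.summable_iff hzero).1 hs))
  exact continuous_iff_continuousAt.2 fun x =>
    ContinuousAt.comp' (g := F) (hd _ (by simp)) (by fun_prop)

theorem exists_eventuallyEq_comp_expPair (hper₁ : Function.Periodic F (1, 0))
    (hper₂ : Function.Periodic F (0, 1))
    (hF : ∀ K, 1 < K → ∃ M, ∀ᶠ w in tubeAtTop K, DifferentiableAt ℂ F w ∧ ‖F w‖ ≤ M) :
    ∃ r : ℝ, 0 < r ∧ ∃ g : ℂ × ℂ → ℂ, DifferentiableOn ℂ g {w | ‖w.1‖ < r ∧ ‖w.2‖ < r} ∧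
      ∀ K, 1 < K → F =ᶠ[tubeAtTop K] g ∘ expPair := by
  have hd (K : ℝ) (hK : 1 < K) : ∀ᶠ w in tubeAtTop K, DifferentiableAt ℂ F w :=
    (hF K hK).elim fun _ hM => hM.mono fun _ => And.left
  obtain ⟨a, ha⟩ := exists_forall_laurentCoeff_eventually_eq hper₁ hper₂ hd
  have hbound (K : ℝ) (hK : 1 < K) : ∃ M, ∀ᶠ p in coneAtTop K, ∀ k : ℤ × ℤ,
      ‖a k‖ ≤ M * Real.exp (2 * Real.pi * (k.1 * p.1 + k.2 * p.2)) := by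
    obtain ⟨M, hM⟩ := hF K hK
    refine ⟨M, ?_⟩
    filter_upwards [ha K hK, eventually_comap.1 hM] with p hap hMp k
    exact hap k ▸ norm_laurentCoeff_le (fun w hw => (hMp w hw).2) k
  have hneg (k : ℤ × ℤ) (hk : k.1 < 0 ∨ k.2 < 0) : a k = 0 :=
    eq_zero_of_eventually_norm_le_exp hk fun K hK =>
      (hbound K hK).imp fun M hM => hM.mono fun p hp => hp k
  obtain ⟨M, hM⟩ := hbound 2 one_lt_two
  obtain ⟨T, hT⟩ := ((tendsto_ray_coneAtTop one_pos one_pos (by norm_num)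
    (by norm_num)).eventually hM).exists
  simp only [mul_one] at hT
  have hr : 0 < Real.exp (-2 * Real.pi * T / 1) := Real.exp_pos _
  have hcauchy (k : ℕ × ℕ) : ‖a (k.1, k.2)‖ *
      (Real.exp (-2 * Real.pi * T / 1) ^ k.1 * Real.exp (-2 * Real.pi * T / 1) ^ k.2) ≤ M := by
    refine (mul_le_mul_of_nonneg_right (hT (k.1, k.2)) (by positivity)).trans_eq ?_
    rw [mul_assoc, ← Real.exp_nat_mul, ← Real.exp_nat_mul, ← Real.exp_add, ← Real.exp_add]
    simp only [Int.cast_natCast]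
    ring_nf
    rw [Real.exp_zero, mul_one]
  refine ⟨_, hr, _, differentiableOn_doublePowerSeries hr hcauchy, fun K hK => ?_⟩
  filter_upwards [eventually_gt_tubeAtTop K T, (ha K hK).comap _,
    (eventually_comap.1 (hd K hK)).comap _] with w hw hcoeff hdw
  refine (hasSum_expPair_of_laurentCoeff_eq hper₁ hper₂ hneg (fun w' hw' =>
    (hdw w' hw').continuousAt) hcoeff (summable_doublePowerSeries hr hcauchy ?_ ?_)).tsum_eq.symm
  · exact (Function.Periodic.norm_qParam_lt_iff one_pos T w.1).2 hw.1
  · exact (Function.Periodic.norm_qParam_lt_iff one_pos T w.2).2 hw.2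

end TubeTheorem
section Sectors

open Filter Set Topology

theorem im_mul_eq_norm_mul_sin (z w : ℂ) :
    (z * w).im = ‖z‖ * ‖w‖ * Real.sin (arg z + arg w) := by
  rw [mul_im, Real.sin_add]
  linear_combination (-‖w‖ * Real.sin (arg w)) * norm_mul_cos_arg z - z.re * norm_mul_sin_arg w -
    ‖w‖ * Real.cos (arg w) * norm_mul_sin_arg z - z.im * norm_mul_cos_arg w

theorem arg_mem_Ioo_zero_pi {z : ℂ} (hz : 0 < z.im) : arg z ∈ Ioo 0 Real.pi := by
  refine ⟨(arg_nonneg_iff.2 hz.le).lt_of_ne fun h => ?_, arg_lt_pi_iff.2 (.inr hz.ne')⟩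
  exact hz.ne' (arg_eq_zero_iff.1 h.symm).2

variable {τ : ℂ}

theorem exists_pos_mul_norm_le_im (hτ : 0 < τ.im) {ε : ℝ} (hε : 0 < ε) :
    ∃ δ, 0 < δ ∧ ∀ ξ : ℂ, ε < arg ξ → arg ξ < Real.pi - arg τ - ε →
      δ * ‖ξ‖ ≤ ξ.im ∧ δ * ‖ξ‖ ≤ (τ * ξ).im := by
  have hτ₀ : 0 < ‖τ‖ := hτ.trans_le (im_le_norm τ)
  obtain ⟨hτ₁, -⟩ := arg_mem_Ioo_zero_pi hτ
  obtain ⟨δ, hδ, hmin⟩ := isCompact_Icc (a := ε) (b := Real.pi - arg τ - ε) |>.exists_forall_le'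
    (f := fun θ => min (Real.sin θ) (‖τ‖ * Real.sin (arg τ + θ))) (a := 0) (by fun_prop)
    fun θ hθ => lt_min (Real.sin_pos_of_pos_of_lt_pi (by linarith [hθ.1]) (by linarith [hθ.2]))
      (mul_pos hτ₀ (Real.sin_pos_of_pos_of_lt_pi (by linarith [hθ.1]) (by linarith [hθ.2])))
  refine ⟨δ, hδ, fun ξ h₁ h₂ => ?_⟩
  obtain ⟨hξ, hτξ⟩ := le_min_iff.1 (hmin (arg ξ) ⟨h₁.le, h₂.le⟩)
  constructor
  · rw [← norm_mul_sin_arg ξ, mul_comm]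
    gcongr
  · rw [im_mul_eq_norm_mul_sin, mul_right_comm]
    gcongr

theorem exists_pos_arg_mem_of_mem_quadrantCone (hτ : 0 < τ.im) (K : ℝ) :
    ∃ ε, 0 < ε ∧ ∀ ξ : ℂ, 0 < ξ.im → 0 < (τ * ξ).im → (ξ.im, (τ * ξ).im) ∈ quadrantCone K →
      ε < arg ξ ∧ arg ξ < Real.pi - arg τ - ε := by
  have hτ₀ : 0 < ‖τ‖ := hτ.trans_le (im_le_norm τ)
  obtain ⟨hτ₁, hτ₂⟩ := arg_mem_Ioo_zero_pi hτ
  have hleft : ∀ᶠ θ in 𝓝 0, K * Real.sin θ < ‖τ‖ * Real.sin (arg τ + θ) := by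
    refine ContinuousAt.eventually_lt (by fun_prop) (by fun_prop) ?_
    simpa using mul_pos hτ₀ (Real.sin_pos_of_pos_of_lt_pi hτ₁ hτ₂)
  have hright : ∀ᶠ θ in 𝓝 (Real.pi - arg τ), K * (‖τ‖ * Real.sin (arg τ + θ)) < Real.sin θ := by
    refine ContinuousAt.eventually_lt (by fun_prop) (by fun_prop) ?_
    simpa using Real.sin_pos_of_pos_of_lt_pi hτ₁ hτ₂
  obtain ⟨ε₁, hε₁, hleft⟩ := Metric.eventually_nhds_iff.1 hleft
  obtain ⟨ε₂, hε₂, hright⟩ := Metric.eventually_nhds_iff.1 hright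
  refine ⟨min ε₁ ε₂ / 2, by positivity, fun ξ hξ hτξ ⟨h₁, h₂⟩ => ?_⟩
  have hξ₀ : 0 < ‖ξ‖ := hξ.trans_le (im_le_norm ξ)
  obtain ⟨hξ₁, hξ₂⟩ := arg_mem_Ioo_zero_pi hξ
  rw [im_mul_eq_norm_mul_sin] at hτξ h₁ h₂
  rw [← norm_mul_sin_arg ξ] at h₁ h₂
  have hsum : arg τ + arg ξ < Real.pi := by
    by_contra! hpi
    have := Real.sin_nonneg_of_nonneg_of_le_pi (sub_nonneg.2 hpi) (by linarith)
    rw [Real.sin_sub_pi] at this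
    exact (pos_of_mul_pos_right hτξ (by positivity)).not_ge (neg_nonneg.1 this)
  constructor
  · by_contra! hle
    have := hleft (y := arg ξ) (by
      rw [Real.dist_eq, sub_zero, abs_of_pos hξ₁]; linarith [min_le_left ε₁ ε₂])
    nlinarith
  · by_contra! hle
    have := hright (y := arg ξ) (by
      rw [Real.dist_eq, abs_of_neg (by linarith)]; linarith [min_le_right ε₁ ε₂])
    nlinarith

theorem eventually_add_snd_coneAtTop {K K' : ℝ} (hK : 0 < K) (hKK' : K < K') (C : ℝ)
    {P : ℝ × ℝ → Prop} (hP : ∀ᶠ p in coneAtTop K', P p) :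
    ∀ᶠ p in coneAtTop K, ∀ b, |b| ≤ C → P (p.1, p.2 + b) := by
  obtain ⟨T, -, hT⟩ := (coneAtTop_hasBasis K').eventually_iff.1 hP
  have hsub : 0 < K' - K := sub_pos.2 hKK'
  filter_upwards [eventually_gt_coneAtTop K T, eventually_gt_coneAtTop K (T + C),
    eventually_gt_coneAtTop K (C / (K' - K)), eventually_gt_coneAtTop K (K' * C / (K' - K)),
    mem_inf_of_right (mem_principal_self _)] with p hp₁ hp₂ hp₃ hp₄ hp b hb
  obtain ⟨hb₁, hb₂⟩ := abs_le.1 hb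
  rw [div_lt_iff₀ hsub, div_lt_iff₀ hsub] at hp₃ hp₄
  have hC : K' * -C ≤ K' * b := by gcongr; exact (hK.trans hKK').le
  refine hT ⟨⟨hp₁.1, ?_⟩, ?_, ?_⟩
  · exact mem_Ioi.2 (by linarith [hp₂.2])
  · change p.1 < K' * (p.2 + b)
    linarith [hp.1, hp₄.2]
  · change p.2 + b < K' * p.1
    linarith [hp.2, hp₃.1]

/-- The filter generated by the sectors `Ssector τ c ε R` as `R → ∞`. -/
noncomputable def sectorAtTop (τ : ℂ) (c ε : ℝ) : Filter (ℂ × ℂ) :=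
  comap (fun p => ‖p.2‖) atTop ⊓ 𝓟 (Ssector τ c ε 0)

theorem sectorAtTop_hasBasis (τ : ℂ) (c ε : ℝ) :
    (sectorAtTop τ c ε).HasBasis (fun R : ℝ => 0 < R) (Ssector τ c ε) := by
  refine (((atTop_basis_Ioi' (0 : ℝ)).comap fun p : ℂ × ℂ => ‖p.2‖).inf_principal _).congr
    (fun _ => Iff.rfl) fun R hR => ?_
  ext p
  have hpos : R < ‖p.2‖ → 0 < ‖p.2‖ := hR.trans
  simp only [Ssector, mem_inter_iff, mem_preimage, mem_Ioi, mem_ofPred_eq]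
  tauto

theorem neBot_sectorAtTop (hτ : 0 < τ.im) {c ε : ℝ} (hc : 0 < c)
    (hε : ε < (Real.pi - arg τ) / 2) : (sectorAtTop τ c ε).NeBot := by
  obtain ⟨hτ₁, hτ₂⟩ := arg_mem_Ioo_zero_pi hτ
  refine (sectorAtTop_hasBasis τ c ε).neBot_iff.2 fun {R} hR =>
    ⟨(1, (R + 1 : ℝ) * exp (((Real.pi - arg τ) / 2 : ℝ) * I)), ?_⟩
  have harg : arg ((R + 1 : ℝ) * exp (((Real.pi - arg τ) / 2 : ℝ) * I)) =
      (Real.pi - arg τ) / 2 := by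
    rw [arg_real_mul _ (by linarith), arg_exp_mul_I, toIocMod_eq_self]
    constructor <;> linarith
  have hnorm : ‖(R + 1 : ℝ) * exp (((Real.pi - arg τ) / 2 : ℝ) * I)‖ = R + 1 := by
    rw [norm_mul, norm_exp_ofReal_mul_I, mul_one, Complex.norm_of_nonneg (by linarith)]
  refine ⟨one_ne_zero, ?_, ?_, ?_, ?_, ?_⟩
  · simpa
  · simpa
  all_goals simp only [harg, hnorm]; linarith

theorem tendsto_im_sectorAtTop (hτ : 0 < τ.im) (c : ℝ) {ε : ℝ} (hε : 0 < ε) :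
    ∃ K, 1 < K ∧
      Tendsto (fun p => (p.2.im, (τ * p.2).im)) (sectorAtTop τ c ε) (coneAtTop K) := by
  obtain ⟨δ, hδ, hdir⟩ := exists_pos_mul_norm_le_im hτ hε
  have hbound (p : ℂ × ℂ) (hp : p ∈ Ssector τ c ε 0) :
      δ * ‖p.2‖ ≤ p.2.im ∧ δ * ‖p.2‖ ≤ (τ * p.2).im := hdir p.2 hp.2.2.2.2.1 hp.2.2.2.2.2
  have hnorm : Tendsto (fun p : ℂ × ℂ => δ * ‖p.2‖) (sectorAtTop τ c ε) atTop :=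
    (tendsto_comap.mono_left inf_le_left).const_mul_atTop hδ
  have hmem : ∀ᶠ p in sectorAtTop τ c ε, p ∈ Ssector τ c ε 0 :=
    mem_inf_of_right (mem_principal_self _)
  have hK : 0 < (1 + ‖τ‖) / δ := by positivity
  refine ⟨(1 + ‖τ‖) / δ + 1, by linarith, tendsto_inf.2 ⟨?_, tendsto_principal.2 ?_⟩⟩
  · rw [← prod_atTop_atTop_eq]
    exact (tendsto_atTop_mono' _ (hmem.mono fun p hp => (hbound p hp).1) hnorm).prodMk
      (tendsto_atTop_mono' _ (hmem.mono fun p hp => (hbound p hp).2) hnorm)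
  · filter_upwards [hmem] with p hp
    have hpos : 0 < ‖p.2‖ := hp.2.2.2.1
    have hlarge {v : ℝ} (hv : δ * ‖p.2‖ ≤ v) :
        (1 + ‖τ‖) * ‖p.2‖ < ((1 + ‖τ‖) / δ + 1) * v := by
      calc (1 + ‖τ‖) * ‖p.2‖ = (1 + ‖τ‖) / δ * (δ * ‖p.2‖) := by field_simp
        _ ≤ (1 + ‖τ‖) / δ * v := by gcongr
        _ < ((1 + ‖τ‖) / δ + 1) * v := by nlinarith [mul_pos hδ hpos]
    have him := (im_le_norm (τ * p.2)).trans_eq (norm_mul τ p.2)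
    refine ⟨lt_of_le_of_lt ?_ (hlarge (hbound p hp).2), lt_of_le_of_lt ?_ (hlarge (hbound p hp).1)⟩
    · nlinarith [im_le_norm p.2, norm_nonneg τ]
    · linarith

end Sectors

section SerreLift

open Filter Set Topology

variable {τ : ℂ} {f : ℂ × ℂ → ℂ} {U : Set (ℂ × ℂ)}

/-- The lifts `serreLift τ n w`, `n : ℤ`, of `expPair w` along the Serre map `PiMap τ`: the lift
of index `n` has second coordinate `w.1 + n`. -/
noncomputable def serreLift (τ : ℂ) (n : ℤ) (w : ℂ × ℂ) : ℂ × ℂ :=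
  (𝕢 (w.2 - τ * (w.1 + n)), w.1 + n)

theorem PiMap_serreLift (τ : ℂ) (n : ℤ) (w : ℂ × ℂ) : PiMap τ (serreLift τ n w) = expPair w := by
  rw [PiMap, serreLift, expPair, mul_assoc _ τ]
  simp only [← qParam_one_apply, ← qParam_add, sub_add_cancel]
  rw [qParam_add, qParam_one_intCast, mul_one]

theorem serreLift_add_one_fst (τ : ℂ) (n : ℤ) (w : ℂ × ℂ) :
    serreLift τ n (w + (1, 0)) = serreLift τ (n + 1) w := by
  simp [serreLift, add_right_comm, add_assoc]

theorem serreLift_add_one_snd (τ : ℂ) (n : ℤ) (w : ℂ × ℂ) :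
    serreLift τ n (w + (0, 1)) = serreLift τ n w := by
  simp [serreLift, add_sub_right_comm, qParam_one_periodic _]

theorem serreLift_eq_of_succ (τ : ℂ) (n : ℤ) (w : ℂ × ℂ) :
    (exp (2 * Real.pi * I * τ) * (serreLift τ (n + 1) w).1, (serreLift τ (n + 1) w).2 - 1) =
      serreLift τ n w := by
  rw [← qParam_one_apply]
  simp only [serreLift, ← qParam_add]
  push_cast
  ring_nf

theorem differentiable_serreLift (τ : ℂ) (n : ℤ) : Differentiable ℂ (serreLift τ n) :=
  (Function.Periodic.differentiable_qParam.comp (by fun_prop)).prodMk (by fun_prop)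

/-- The indices `n` for which the first coordinate `𝕢 ζ` of `serreLift τ n w` has `|ζ.im| ≤ C`. -/
def liftIndices (τ : ℂ) (C : ℝ) (w : ℂ × ℂ) : Set ℤ :=
  {n | |(w.2 - τ * (w.1 + n)).im| ≤ C}

theorem im_sub_mul_add_intCast (τ : ℂ) (n : ℤ) (w : ℂ × ℂ) :
    (w.2 - τ * (w.1 + n)).im = (w.2 - τ * w.1).im - n * τ.im := by
  simp only [mul_add, sub_im, add_im, mul_im, intCast_re, intCast_im, mul_zero, zero_add]
  ring

theorem ordConnected_liftIndices (hτ : 0 < τ.im) (C : ℝ) (w : ℂ × ℂ) :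
    (liftIndices τ C w).OrdConnected := by
  refine ⟨fun m hm n hn k hk => ?_⟩
  have hmk : (m : ℝ) * τ.im ≤ k * τ.im := by gcongr; exact_mod_cast hk.1
  have hkn : (k : ℝ) * τ.im ≤ n * τ.im := by gcongr; exact_mod_cast hk.2
  simp only [liftIndices, mem_ofPred_eq, im_sub_mul_add_intCast, abs_le] at hm hn ⊢
  constructor <;> linarith

theorem exists_sectorAtTop_serreLift_mem (hτ : 0 < τ.im) {K : ℝ} (hK : 1 < K) (C : ℝ) :
    ∃ c, 0 < c ∧ ∃ ε, 0 < ε ∧ ∀ s ∈ sectorAtTop τ c ε,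
      ∀ᶠ w in tubeAtTop K, ∀ n ∈ liftIndices τ C w, serreLift τ n w ∈ s := by
  obtain ⟨ε, hε, harg⟩ := exists_pos_arg_mem_of_mem_quadrantCone hτ (2 * K)
  refine ⟨2 * Real.pi * |C| + 1, by positivity, ε, hε, fun s hs => ?_⟩
  obtain ⟨R, hR, hRs⟩ := (sectorAtTop_hasBasis τ _ ε).mem_iff.1 hs
  have hcone : ∀ᶠ p in coneAtTop (2 * K), (R < p.1 ∧ R < p.2) ∧ p ∈ quadrantCone (2 * K) :=
    (eventually_gt_coneAtTop _ R).and (mem_inf_of_right (mem_principal_self _))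
  filter_upwards [(eventually_add_snd_coneAtTop (by linarith) (by linarith) C hcone).comap _]
    with w hw n hn
  obtain ⟨⟨hR₁, hR₂⟩, hquad⟩ := hw (-(w.2 - τ * (w.1 + n)).im) (by rwa [abs_neg])
  have him₁ : (w.1 + n).im = w.1.im := by simp
  have him₂ : (τ * (w.1 + n)).im = w.2.im + -(w.2 - τ * (w.1 + n)).im := by rw [sub_im]; ring
  rw [← him₂] at hR₂ hquad
  rw [← him₁] at hR₁ hquad
  obtain ⟨him₃, him₄⟩ := abs_le.1 (hn.trans (le_abs_self C))
  have hnorm : ‖𝕢 (w.2 - τ * (w.1 + n))‖ =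
      Real.exp (-(2 * Real.pi * (w.2 - τ * (w.1 + n)).im)) := by
    simpa using norm_qParam_one_zpow (w.2 - τ * (w.1 + n)) 1
  have hpi := Real.two_pi_pos
  obtain ⟨harg₁, harg₂⟩ := harg (w.1 + n) (hR.trans hR₁) (hR.trans hR₂) hquad
  refine hRs ⟨Function.Periodic.qParam_ne_zero _, ?_, ?_, hR₁.trans_le (im_le_norm _), harg₁, harg₂⟩
  · exact (Real.exp_lt_exp.2 (by nlinarith)).trans_eq hnorm.symm
  · exact hnorm.trans_lt (Real.exp_lt_exp.2 (by nlinarith))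

theorem eq_of_ordConnected_int {α : Type*} {s : Set ℤ} [s.OrdConnected] {φ : ℤ → α}
    (hφ : ∀ n, n ∈ s → n + 1 ∈ s → φ n = φ (n + 1)) {m n : ℤ} (hm : m ∈ s) (hn : n ∈ s) :
    φ m = φ n := by
  wlog hmn : m ≤ n generalizing m n
  · exact (this hn hm (le_of_not_ge hmn)).symm
  induction n, hmn using Int.leInduction with
  | base => rfl
  | succ k hk ih =>
    have hks : k ∈ s := Set.OrdConnected.out ‹_› hm hn ⟨hk, by lia⟩
    exact (ih hks).trans (hφ k hks hn)

/-- The index of the lift whose first coordinate `𝕢 ζ` has `0 ≤ ζ.im < τ.im`. -/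
noncomputable def liftIndex (τ : ℂ) (w : ℂ × ℂ) : ℤ :=
  ⌊(w.2 - τ * w.1).im / τ.im⌋

theorem im_liftIndex_mem_Ico (hτ : 0 < τ.im) (w : ℂ × ℂ) :
    (w.2 - τ * (w.1 + liftIndex τ w)).im ∈ Ico 0 τ.im := by
  have h₁ := (le_div_iff₀ hτ).1 (Int.floor_le ((w.2 - τ * w.1).im / τ.im))
  have h₂ := (div_lt_iff₀ hτ).1 (Int.lt_floor_add_one ((w.2 - τ * w.1).im / τ.im))
  rw [im_sub_mul_add_intCast, liftIndex]
  constructor <;> linarith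

theorem liftIndex_mem_liftIndices (hτ : 0 < τ.im) {C : ℝ} (hC : τ.im ≤ C) (w : ℂ × ℂ) :
    liftIndex τ w ∈ liftIndices τ C w := by
  obtain ⟨h₁, h₂⟩ := im_liftIndex_mem_Ico hτ w
  exact (abs_of_nonneg h₁).trans_le (h₂.le.trans hC)

theorem eventually_liftIndex_mem_liftIndices (hτ : 0 < τ.im) {C : ℝ} (hC : τ.im < C)
    (w : ℂ × ℂ) : ∀ᶠ w' in 𝓝 w, liftIndex τ w ∈ liftIndices τ C w' := by
  obtain ⟨h₁, h₂⟩ := im_liftIndex_mem_Ico hτ w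
  have hcont : Continuous fun w' : ℂ × ℂ => |(w'.2 - τ * (w'.1 + liftIndex τ w)).im| := by fun_prop
  exact (hcont.tendsto w).eventually (Iic_mem_nhds (abs_lt.2 ⟨by linarith, by linarith⟩))

/-- The function on a tube which a function `f`, invariant under the Serre group, defines through
`serreLift`. Choosing the lift by `liftIndex` makes it periodic everywhere. -/
noncomputable def tubeFun (τ : ℂ) (f : ℂ × ℂ → ℂ) (w : ℂ × ℂ) : ℂ :=
  f (serreLift τ (liftIndex τ w) w)

theorem tubeFun_periodic_fst (hτ : 0 < τ.im) (f : ℂ × ℂ → ℂ) :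
    Function.Periodic (tubeFun τ f) (1, 0) := fun w => by
  have hindex : liftIndex τ (w + (1, 0)) + 1 = liftIndex τ w := by
    have him := im_sub_mul_add_intCast τ 1 w
    rw [Int.cast_one, Int.cast_one, one_mul] at him
    rw [liftIndex, Prod.fst_add, Prod.snd_add, add_zero, him, sub_div, div_self hτ.ne',
      Int.floor_sub_one, sub_add_cancel, liftIndex]
  rw [tubeFun, serreLift_add_one_fst, hindex, tubeFun]

theorem tubeFun_periodic_snd (τ : ℂ) (f : ℂ × ℂ → ℂ) :
    Function.Periodic (tubeFun τ f) (0, 1) := fun w => by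
  have hindex : liftIndex τ (w + (0, 1)) = liftIndex τ w := by simp [liftIndex]
  rw [tubeFun, serreLift_add_one_snd, hindex, tubeFun]

theorem eventually_tubeFun_eq (hτ : 0 < τ.im)
    (hU : ∀ c, 0 < c → ∀ ε, 0 < ε → U ∈ sectorAtTop τ c ε)
    (hinv : ∀ p ∈ U, (exp (2 * Real.pi * I * τ) * p.1, p.2 - 1) ∈ U →
      f (exp (2 * Real.pi * I * τ) * p.1, p.2 - 1) = f p)
    {K : ℝ} (hK : 1 < K) {C : ℝ} (hC : τ.im ≤ C) :
    ∀ᶠ w in tubeAtTop K, ∀ n ∈ liftIndices τ C w,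
      serreLift τ n w ∈ U ∧ tubeFun τ f w = f (serreLift τ n w) := by
  obtain ⟨c, hc, ε, hε, hlift⟩ := exists_sectorAtTop_serreLift_mem hτ hK C
  filter_upwards [hlift U (hU c hc ε hε)] with w hw n hn
  have := ordConnected_liftIndices hτ C w
  refine ⟨hw n hn, eq_of_ordConnected_int (s := liftIndices τ C w)
    (φ := fun n => f (serreLift τ n w)) (fun m hm hm' => ?_) (liftIndex_mem_liftIndices hτ hC w) hn⟩
  have hstep := hinv _ (hw _ hm')
  rw [serreLift_eq_of_succ] at hstep
  exact hstep (hw m hm)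

theorem eventually_differentiableAt_tubeFun (hτ : 0 < τ.im) (hUo : IsOpen U)
    (hU : ∀ c, 0 < c → ∀ ε, 0 < ε → U ∈ sectorAtTop τ c ε) (hf : DifferentiableOn ℂ f U)
    (hinv : ∀ p ∈ U, (exp (2 * Real.pi * I * τ) * p.1, p.2 - 1) ∈ U →
      f (exp (2 * Real.pi * I * τ) * p.1, p.2 - 1) = f p)
    {K : ℝ} (hK : 1 < K) : ∀ᶠ w in tubeAtTop K, DifferentiableAt ℂ (tubeFun τ f) w := by
  have hC : τ.im < 2 * τ.im := by linarith
  filter_upwards [eventually_eventually_nhds_tubeAtTop (eventually_tubeFun_eq hτ hU hinv hK hC.le)]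
    with w hw
  have hmem := (hw.self_of_nhds _ (liftIndex_mem_liftIndices hτ hC.le w)).1
  have hcongr : tubeFun τ f =ᶠ[𝓝 w] fun w' => f (serreLift τ (liftIndex τ w) w') := by
    filter_upwards [hw, eventually_liftIndex_mem_liftIndices hτ hC w] with w' hw' hn
    exact (hw' _ hn).2
  exact (((hf.differentiableAt (hUo.mem_nhds hmem)).comp w
    (differentiable_serreLift τ _ w)).congr_of_eventuallyEq hcongr)

theorem exists_eventually_norm_tubeFun_le (hτ : 0 < τ.im)
    (hbd : ∀ c, 0 < c → ∀ ε, 0 < ε → ∃ M, ∀ᶠ p in sectorAtTop τ c ε, ‖f p‖ ≤ M)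
    {K : ℝ} (hK : 1 < K) : ∃ M, ∀ᶠ w in tubeAtTop K, ‖tubeFun τ f w‖ ≤ M := by
  obtain ⟨c, hc, ε, hε, hlift⟩ := exists_sectorAtTop_serreLift_mem hτ hK τ.im
  obtain ⟨M, hM⟩ := hbd c hc ε hε
  exact ⟨M, (hlift _ hM).mono fun w hw => hw _ (liftIndex_mem_liftIndices hτ le_rfl w)⟩

/-- A logarithm of `PiMap τ p`, in the coordinates of `expPair`, of which `p` is the lift of
index `0`. -/
noncomputable def serreLog (τ : ℂ) (p : ℂ × ℂ) : ℂ × ℂ :=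
  (p.2, τ * p.2 + Function.Periodic.invQParam 1 p.1)

theorem serreLift_zero_serreLog (τ : ℂ) {p : ℂ × ℂ} (hp : p.1 ≠ 0) :
    serreLift τ 0 (serreLog τ p) = p := by
  simp [serreLift, serreLog, Function.Periodic.qParam_right_inv one_ne_zero hp]

theorem abs_im_invQParam_le {c : ℝ} {z : ℂ} (h₁ : Real.exp (-c) < ‖z‖) (h₂ : ‖z‖ < Real.exp c) :
    |(Function.Periodic.invQParam 1 z).im| ≤ c := by
  have hz : 0 < ‖z‖ := (Real.exp_pos _).trans h₁
  have hlog : |Real.log ‖z‖| ≤ c :=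
    abs_le.2 ⟨((Real.lt_log_iff_exp_lt hz).2 h₁).le, ((Real.log_lt_iff_lt_exp hz).2 h₂).le⟩
  have hpi : 1 ≤ 2 * Real.pi := by linarith [Real.pi_gt_three]
  rw [Function.Periodic.im_invQParam, abs_mul, abs_div, abs_neg, abs_one,
    abs_of_pos Real.two_pi_pos, one_div]
  exact (mul_le_of_le_one_left (abs_nonneg _) (inv_le_one_of_one_le₀ hpi)).trans hlog

theorem tendsto_serreLog_sectorAtTop (hτ : 0 < τ.im) (c : ℝ) {ε : ℝ} (hε : 0 < ε) :
    ∃ K, 1 < K ∧ Tendsto (serreLog τ) (sectorAtTop τ c ε) (tubeAtTop K) := by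
  obtain ⟨K, hK, hlim⟩ := tendsto_im_sectorAtTop hτ c hε
  refine ⟨2 * K, by linarith, tendsto_comap_iff.2 fun s hs => mem_map.2 ?_⟩
  filter_upwards [hlim.eventually (eventually_add_snd_coneAtTop (by linarith) (by linarith) c hs),
    (sectorAtTop_hasBasis τ c ε).mem_of_mem one_pos] with p hp hmem
  exact hp _ (abs_im_invQParam_le hmem.2.1 hmem.2.2.1)

theorem tendsto_PiMap_sectorAtTop (hτ : 0 < τ.im) (c : ℝ) {ε : ℝ} (hε : 0 < ε) :
    Tendsto (PiMap τ) (sectorAtTop τ c ε) (𝓝 (0, 0)) := by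
  obtain ⟨K, -, hlim⟩ := tendsto_serreLog_sectorAtTop hτ c hε
  refine ((tendsto_expPair_tubeAtTop K).comp hlim).congr' ?_
  filter_upwards [(sectorAtTop_hasBasis τ c ε).mem_of_mem one_pos] with p hp
  rw [Function.comp_apply, ← PiMap_serreLift τ 0, serreLift_zero_serreLog τ hp.1]

theorem exists_eventuallyEq_comp_PiMap (hτ : 0 < τ.im) (hUo : IsOpen U)
    (hU : ∀ c, 0 < c → ∀ ε, 0 < ε → U ∈ sectorAtTop τ c ε) (hf : DifferentiableOn ℂ f U)
    (hbd : ∀ c, 0 < c → ∀ ε, 0 < ε → ∃ M, ∀ᶠ p in sectorAtTop τ c ε, ‖f p‖ ≤ M)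
    (hinv : ∀ p ∈ U, (exp (2 * Real.pi * I * τ) * p.1, p.2 - 1) ∈ U →
      f (exp (2 * Real.pi * I * τ) * p.1, p.2 - 1) = f p) :
    ∃ r : ℝ, 0 < r ∧ ∃ g : ℂ × ℂ → ℂ, DifferentiableOn ℂ g {w | ‖w.1‖ < r ∧ ‖w.2‖ < r} ∧
      ∀ c ε, 0 < ε → f =ᶠ[sectorAtTop τ c ε] g ∘ PiMap τ := by
  obtain ⟨r, hr, g, hg, hfg⟩ := exists_eventuallyEq_comp_expPair (tubeFun_periodic_fst hτ f)
    (tubeFun_periodic_snd τ f) fun K hK =>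
      (exists_eventually_norm_tubeFun_le hτ hbd hK).imp fun M hM =>
        (eventually_differentiableAt_tubeFun hτ hUo hU hf hinv hK).and hM
  refine ⟨r, hr, g, hg, fun c ε hε => ?_⟩
  obtain ⟨K, hK, hlim⟩ := tendsto_serreLog_sectorAtTop hτ c hε
  filter_upwards [hlim.eventually (eventually_tubeFun_eq hτ hU hinv hK (le_max_left τ.im c)),
    hlim.eventually (hfg K hK), (sectorAtTop_hasBasis τ c ε).mem_of_mem one_pos] with p hlift heq hp
  have hindex : 0 ∈ liftIndices τ (max τ.im c) (serreLog τ p) := by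
    simpa [liftIndices, serreLog] using .inr (abs_im_invQParam_le hp.2.1 hp.2.2.1)
  calc f p = f (serreLift τ 0 (serreLog τ p)) := by rw [serreLift_zero_serreLog τ hp.1]
    _ = tubeFun τ f (serreLog τ p) := (hlift 0 hindex).2.symm
    _ = g (expPair (serreLog τ p)) := heq
    _ = g (PiMap τ p) := by rw [← PiMap_serreLift τ 0, serreLift_zero_serreLog τ hp.1]

end SerreLift

theorem statement5_general (τ : ℂ) (hτ : 0 < τ.im) (U : Set (ℂ × ℂ)) (hUopen : IsOpen U)
    (hUsect : ∀ c : ℝ, 0 < c → ∀ ε : ℝ, 0 < ε → ∃ R : ℝ, 0 < R ∧ Ssector τ c ε R ⊆ U)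
    (f : ℂ × ℂ → ℂ) (hf : DifferentiableOn ℂ f U)
    (hbd : ∀ c : ℝ, 0 < c → ∀ ε : ℝ, 0 < ε → ∃ R : ℝ, 0 < R ∧
      ∃ M : ℝ, ∀ p ∈ Ssector τ c ε R, ‖f p‖ ≤ M)
    (hinv : ∀ p : ℂ × ℂ, p ∈ U →
      (Complex.exp (2 * (Real.pi : ℂ) * Complex.I * τ) * p.1, p.2 - 1) ∈ U →
      f (Complex.exp (2 * (Real.pi : ℂ) * Complex.I * τ) * p.1, p.2 - 1) = f p) :
    ∃ r : ℝ, 0 < r ∧ ∃ g : ℂ × ℂ → ℂ,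
      DifferentiableOn ℂ g {w : ℂ × ℂ | ‖w.1‖ < r ∧ ‖w.2‖ < r} ∧
      (∀ c : ℝ, 0 < c → ∀ ε : ℝ, 0 < ε → ∃ R : ℝ, 0 < R ∧
        ∀ p ∈ Ssector τ c ε R, f p = g (PiMap τ p)) ∧
      ((∀ c : ℝ, 0 < c → ∀ ε : ℝ, 0 < ε → ∀ η : ℝ, 0 < η → ∃ R : ℝ, 0 < R ∧
          ∀ p ∈ Ssector τ c ε R, ‖f p‖ ≤ η) → g (0, 0) = 0) := by
  have hbasis := sectorAtTop_hasBasis τ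
  obtain ⟨r, hr, g, hg, hfg⟩ := exists_eventuallyEq_comp_PiMap hτ hUopen
    (fun c hc ε hε => (hbasis c ε).mem_iff.2 (hUsect c hc ε hε)) hf
    (fun c hc ε hε => let ⟨R, hR, M, hM⟩ := hbd c hc ε hε
      ⟨M, (hbasis c ε).eventually_iff.2 ⟨R, hR, hM⟩⟩) hinv
  refine ⟨r, hr, g, hg, fun c _ ε hε => (hbasis c ε).eventually_iff.1 (hfg c ε hε),
    fun hsmall => ?_⟩
  have hcont : ContinuousAt g (0, 0) :=
    (hg.differentiableAt ((isOpen_polydisc r).mem_nhds (by simpa))).continuousAt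
  obtain ⟨ε, hε, hετ⟩ := exists_between
    (half_pos (sub_pos.2 (arg_mem_Ioo_zero_pi hτ).2) : 0 < (Real.pi - arg τ) / 2)
  have hlim₀ : Filter.Tendsto f (sectorAtTop τ 1 ε) (nhds 0) :=
    ((hbasis 1 ε).tendsto_iff Metric.nhds_basis_closedBall).2 fun η hη => by
      simpa only [mem_closedBall_zero_iff] using hsmall 1 one_pos ε hε η hη
  have hlim : Filter.Tendsto f (sectorAtTop τ 1 ε) (nhds (g (0, 0))) :=
    (hcont.tendsto.comp (tendsto_PiMap_sectorAtTop hτ 1 hε)).congr' (hfg 1 ε hε).symm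
  have := neBot_sectorAtTop hτ one_pos hετ
  exact tendsto_nhds_unique hlim hlim₀

/-- a bounded holomorphic function on a transversely sectorial domain of
opening `(0, π − ϖ)` invariant under `F₁₀₀(z,ξ) = (qz, ξ−1)` factors through the Serre map
`Π` as `f = g ∘ Π` with `g` holomorphic at the corner point; if moreover `f` is (sup-)small
at infinity then `g(0,0) = 0`. -/
theorem statement5 (τ : ℂ) (hτ : 0 < τ.im)
    (U : Set (ℂ × ℂ)) (hUopen : IsOpen U) (hU0 : U ⊆ {p : ℂ × ℂ | p.1 ≠ 0})
    (hUsect : ∀ c : ℝ, 0 < c → ∀ ε : ℝ, 0 < ε → ∃ R : ℝ, 0 < R ∧ Ssector τ c ε R ⊆ U)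
    (f : ℂ × ℂ → ℂ) (hf : DifferentiableOn ℂ f U)
    (hbd : ∃ M : ℝ, ∀ p ∈ U, ‖f p‖ ≤ M)
    (hinv : ∀ p : ℂ × ℂ, p ∈ U →
      (Complex.exp (2 * (Real.pi : ℂ) * Complex.I * τ) * p.1, p.2 - 1) ∈ U →
      f (Complex.exp (2 * (Real.pi : ℂ) * Complex.I * τ) * p.1, p.2 - 1) = f p) :
    ∃ r : ℝ, 0 < r ∧ ∃ g : ℂ × ℂ → ℂ,
      DifferentiableOn ℂ g {w : ℂ × ℂ | ‖w.1‖ < r ∧ ‖w.2‖ < r} ∧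
      (∀ c : ℝ, 0 < c → ∀ ε : ℝ, 0 < ε → ∃ R : ℝ, 0 < R ∧
        ∀ p ∈ Ssector τ c ε R, f p = g (PiMap τ p)) ∧
      ((∀ c : ℝ, 0 < c → ∀ ε : ℝ, 0 < ε → ∀ η : ℝ, 0 < η → ∃ R : ℝ, 0 < R ∧
          ∀ p ∈ Ssector τ c ε R, ‖f p‖ ≤ η) → g (0, 0) = 0) := by
  obtain ⟨M, hM⟩ := hbd
  exact statement5_general τ hτ U hUopen hUsect f hf (fun c hc ε hε =>
    let ⟨R, hR, hRU⟩ := hUsect c hc ε hε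
    ⟨R, hR, M, fun p hp => hM p (hRU hp)⟩) hinv
end

section
/- Let U ⊆ ℂ* × ℂ be an open set such that for every c > 0 and ε > 0 there exists R > 0 with T(c,ε,R) := {(z,ξ) ∈ ℂ* × ℂ : e^{−c} < |z| < e^{c}, |ξ| > R, arg ξ ∈ (−ϖ+ε, π−ϖ−ε)} ⊆ U. Let f : U → ℂ be holomorphic and bounded, and suppose f(q·z, ξ−1) = f(z,ξ) whenever both (z,ξ) ∈ U and (q·z, ξ−1) ∈ U. Then there exist r > 0 and a holomorphic function g on the disc {w ∈ ℂ : |w| < r} such that for every c > 0 and ε > 0 there is R > 0 with f(z,ξ) = g(z·exp(2πiτξ)) for all (z,ξ) ∈ T(c,ε,R); that is, f is a first integral of the fibration by the level sets of Y(z,ξ) = z·exp(2πiτξ). If moreover the supremum of |f| over T(c,ε,R) tends to 0 as R → ∞ for every c, ε, then g(0) = 0. -/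
/-!
The map `(z, ξ) ↦ (w, u) = (z * exp (2πiτξ), exp (2πiξ))` is the quotient by the orbits of
`(z, ξ) ↦ (q z, ξ - 1)`, so `f` descends to a function `F (w, u)`. The sectors become the horns
`|w| ^ A < |u| < |w| ^ (-A)`, on which `F` is holomorphic and bounded for small `w`, for every `A`.
Hence, for fixed small `w`, the bounded function `u ↦ F (w, u)` lives on a very fat annulus, and a
Schwarz lemma on that annulus gives `F (w, u) - F (w, 1) = O(|w| ^ N)` for every `N`. As a function
of `w` this difference is flat at the puncture `0`, so it vanishes, and `g w = F (w, 1)` extends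
over `0` because it is bounded.
-/

open Complex

/-- The sector `T(c,ε,R)` of directions `arg ξ ∈ (−ϖ+ε, π − ϖ − ε)`, `ϖ = arg τ`. -/
noncomputable def Tsector (τ : ℂ) (c ε R : ℝ) : Set (ℂ × ℂ) :=
  {p : ℂ × ℂ | p.1 ≠ 0 ∧ Real.exp (-c) < ‖p.1‖ ∧ ‖p.1‖ < Real.exp c ∧
    R < ‖p.2‖ ∧ -Complex.arg τ + ε < Complex.arg p.2 ∧
    Complex.arg p.2 < Real.pi - Complex.arg τ - ε}

open Filter Set Topology

section FlatFunctions

variable {E : Type*} [NormedAddCommGroup E] [NormedSpace ℂ E] {f : ℂ → E} {c : ℂ}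

lemma eventually_eq_zero_of_forall_isBigO_pow (hf : AnalyticAt ℂ f c)
    (hflat : ∀ N : ℕ, f =O[𝓝[≠] c] fun z => (z - c) ^ N) : ∀ᶠ z in 𝓝 c, f z = 0 := by
  by_contra hne
  obtain ⟨n, g, hg, hgc, hfg⟩ := hf.exists_eventuallyEq_pow_smul_nonzero_iff.2 hne
  have hgO : g =O[𝓝[≠] c] fun z => z - c := by
    obtain ⟨C, hC⟩ := (hflat (n + 1)).bound
    refine Asymptotics.IsBigO.of_bound C ?_
    filter_upwards [hC, hfg.filter_mono nhdsWithin_le_nhds, self_mem_nhdsWithin] with z hz hfz hzc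
    have hpos : 0 < ‖z - c‖ ^ n := pow_pos (norm_pos_iff.2 (sub_ne_zero.2 hzc)) n
    rw [hfz, norm_smul, norm_pow, norm_pow, pow_succ] at hz
    exact le_of_mul_le_mul_left (by linarith) hpos
  have hlim : Tendsto (fun z => z - c) (𝓝[≠] c) (𝓝 0) :=
    (tendsto_sub_nhds_zero_iff.2 tendsto_id).mono_left nhdsWithin_le_nhds
  exact hgc (tendsto_nhds_unique (hg.continuousAt.tendsto.mono_left nhdsWithin_le_nhds)
    (hgO.trans_tendsto hlim))

lemma eqOn_zero_of_forall_isBigO_pow [CompleteSpace E] {s : Set ℂ} (hs : IsOpen s)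
    (hs' : IsPreconnected s) (hc : c ∈ s) (hf : DifferentiableOn ℂ f (s \ {c}))
    (hflat : ∀ N : ℕ, f =O[𝓝[≠] c] fun z => (z - c) ^ N) : EqOn f 0 (s \ {c}) := by
  have hupd : Function.update f c 0 =ᶠ[𝓝[≠] c] f := by
    filter_upwards [self_mem_nhdsWithin] with z hz using Function.update_of_ne hz _ _
  have hcont : ContinuousAt (Function.update f c 0) c := by
    rw [continuousAt_update_same]
    refine (hflat 1).trans_tendsto ?_
    simpa using (tendsto_sub_nhds_zero_iff.2 (tendsto_id (x := 𝓝 c))).mono_left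
      nhdsWithin_le_nhds
  have hdiff : DifferentiableOn ℂ (Function.update f c 0) s :=
    (differentiableOn_compl_singleton_and_continuousAt_iff (hs.mem_nhds hc)).1
      ⟨hf.congr fun z hz => Function.update_of_ne hz.2 _ _, hcont⟩
  have hzero : EqOn (Function.update f c 0) 0 s :=
    (hdiff.analyticOnNhd hs).eqOn_zero_of_preconnected_of_eventuallyEq_zero hs' hc <|
      eventually_eq_zero_of_forall_isBigO_pow (hdiff.analyticAt (hs.mem_nhds hc))
        fun N => hupd.trans_isBigO (hflat N)
  exact fun z hz => by simpa [Function.update_of_ne hz.2] using hzero hz.1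

end FlatFunctions

lemma frontier_annulus_subset (a b : ℝ) :
    frontier {u : ℂ | a ≤ ‖u‖ ∧ ‖u‖ ≤ b} ⊆ {u | ‖u‖ = a ∨ ‖u‖ = b} := by
  intro u hu
  rcases frontier_inter_subset _ _ hu with h | h
  · exact Or.inl (frontier_le_subset_eq continuous_const continuous_norm h.1).symm
  · exact Or.inr (frontier_le_subset_eq continuous_norm continuous_const h.2)

lemma isCompact_annulus (a b : ℝ) : IsCompact {u : ℂ | a ≤ ‖u‖ ∧ ‖u‖ ≤ b} :=
  (isCompact_closedBall (0 : ℂ) b).of_isClosed_subset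
    ((isClosed_le continuous_const continuous_norm).inter
      (isClosed_le continuous_norm continuous_const)) fun u hu => by simpa using hu.2

lemma norm_mul_one_sub_sq_le {v : ℂ} {δ : ℝ} (hδ : 0 < δ) (hδ1 : δ ≤ 1)
    (hv : ‖v‖ = δ ∨ ‖v‖ = δ⁻¹) : ‖v‖ * (1 - δ) ^ 2 ≤ δ * ‖v - 1‖ ^ 2 := by
  have : 0 ≤ 1 - δ := sub_nonneg.2 hδ1
  have : 0 ≤ δ⁻¹ - 1 := sub_nonneg.2 (one_le_inv₀ hδ |>.2 hδ1)
  rcases hv with hv | hv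
  · have hdist : 1 - δ ≤ ‖v - 1‖ := by
      simpa [hv, norm_sub_rev] using norm_sub_norm_le (1 : ℂ) v
    rw [hv]
    gcongr
  · have hdist : δ⁻¹ - 1 ≤ ‖v - 1‖ := by simpa [hv] using norm_sub_norm_le v (1 : ℂ)
    calc ‖v‖ * (1 - δ) ^ 2 = δ * (δ⁻¹ - 1) ^ 2 := by rw [hv]; field_simp
      _ ≤ δ * ‖v - 1‖ ^ 2 := by gcongr

/-- Apply the maximum principle to `u * ((Ψ u - Ψ 1) / (u - 1)) ^ 2`: thanks to the square, the
factor `u` makes the bounds on the two boundary circles equal. -/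
lemma norm_mul_norm_sub_sq_le_of_annulus {Ψ : ℂ → ℂ} {V : Set ℂ} {M δ : ℝ} (hV : IsOpen V)
    (hΨ : DifferentiableOn ℂ Ψ V) (hM : ∀ u ∈ V, ‖Ψ u‖ ≤ M) (hδ : 0 < δ)
    (hδ1 : δ < 1) (hsub : {u : ℂ | δ ≤ ‖u‖ ∧ ‖u‖ ≤ δ⁻¹} ⊆ V) {u : ℂ}
    (hu : δ ≤ ‖u‖ ∧ ‖u‖ ≤ δ⁻¹) :
    ‖u‖ * ‖Ψ u - Ψ 1‖ ^ 2 ≤ (2 * M) ^ 2 * (δ / (1 - δ) ^ 2) * ‖u - 1‖ ^ 2 := by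
  have : 0 < 1 - δ := sub_pos.2 hδ1
  have hcomp := isCompact_annulus δ δ⁻¹
  have h1V : (1 : ℂ) ∈ V := hsub ⟨by simpa using hδ1.le, by simpa using (one_le_inv₀ hδ).2 hδ1.le⟩
  have hslope : ∀ v, ‖Ψ v - Ψ 1‖ = ‖v - 1‖ * ‖dslope Ψ 1 v‖ := fun v => by
    rw [← norm_mul, ← smul_eq_mul, sub_smul_dslope]
  have hdiff : DifferentiableOn ℂ (fun v => v * dslope Ψ 1 v ^ 2) V :=
    differentiableOn_id.mul (((differentiableOn_dslope (hV.mem_nhds h1V)).2 hΨ).pow 2)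
  have hboundary : ∀ v ∈ frontier {v : ℂ | δ ≤ ‖v‖ ∧ ‖v‖ ≤ δ⁻¹},
      ‖v * dslope Ψ 1 v ^ 2‖ ≤ (2 * M) ^ 2 * (δ / (1 - δ) ^ 2) := by
    intro v hv
    have hΨv : ‖Ψ v - Ψ 1‖ ≤ 2 * M := by
      linarith [norm_sub_le (Ψ v) (Ψ 1), hM v (hsub (hcomp.isClosed.frontier_subset hv)), hM 1 h1V]
    rw [← mul_div_assoc, le_div_iff₀ (by positivity), norm_mul, norm_pow]
    calc ‖v‖ * ‖dslope Ψ 1 v‖ ^ 2 * (1 - δ) ^ 2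
        = ‖v‖ * (1 - δ) ^ 2 * ‖dslope Ψ 1 v‖ ^ 2 := by ring
      _ ≤ δ * ‖v - 1‖ ^ 2 * ‖dslope Ψ 1 v‖ ^ 2 := by
        gcongr ?_ * _
        exact norm_mul_one_sub_sq_le hδ hδ1.le (frontier_annulus_subset _ _ hv)
      _ = ‖Ψ v - Ψ 1‖ ^ 2 * δ := by rw [hslope]; ring
      _ ≤ (2 * M) ^ 2 * δ := by gcongr
  have hmax := norm_le_of_forall_mem_frontier_norm_le hcomp.isBounded
    (hdiff.mono (hcomp.isClosed.closure_eq.trans_subset hsub)).diffContOnCl hboundary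
    (subset_closure hu)
  calc ‖u‖ * ‖Ψ u - Ψ 1‖ ^ 2 = ‖u * dslope Ψ 1 u ^ 2‖ * ‖u - 1‖ ^ 2 := by
        rw [hslope, norm_mul, norm_pow]; ring
    _ ≤ (2 * M) ^ 2 * (δ / (1 - δ) ^ 2) * ‖u - 1‖ ^ 2 := by gcongr

/-- The horn `{0 < |w| < r, |w| ^ A < |u| < |w| ^ (-A)}` in the `(w, u)`-plane, written with
logarithms. The conditions `p.1 ≠ 0` and `p.2 ≠ 0` exclude the junk value `Real.log 0 = 0`. -/
def horn (A r : ℝ) : Set (ℂ × ℂ) :=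
  {p | p.1 ≠ 0 ∧ p.2 ≠ 0 ∧ ‖p.1‖ < r ∧ |Real.log ‖p.2‖| < A * -Real.log ‖p.1‖}

lemma horn_mono (A : ℝ) {r r' : ℝ} (h : r ≤ r') : horn A r ⊆ horn A r' :=
  fun _ ⟨h1, h2, h3, h4⟩ => ⟨h1, h2, h3.trans_le h, h4⟩

lemma isOpen_horn (A r : ℝ) : IsOpen (horn A r) := by
  have hne : IsOpen {p : ℂ × ℂ | p.1 ≠ 0 ∧ p.2 ≠ 0} :=
    (isOpen_ne_fun continuous_fst continuous_const).inter
      (isOpen_ne_fun continuous_snd continuous_const)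
  have hcont : ContinuousOn (fun p : ℂ × ℂ => A * -Real.log ‖p.1‖ - |Real.log ‖p.2‖|)
      {p : ℂ × ℂ | p.1 ≠ 0 ∧ p.2 ≠ 0} :=
    ((continuous_fst.norm.continuousOn.log fun p hp => norm_ne_zero_iff.2 hp.1).neg.const_mul
      A).sub (continuous_snd.norm.continuousOn.log fun p hp => norm_ne_zero_iff.2 hp.2).abs
  convert (hcont.isOpen_inter_preimage hne (isOpen_Ioi (a := 0))).inter
    (isOpen_lt continuous_fst.norm (continuous_const (y := r))) using 1
  ext p
  simp only [horn, mem_ofPred_eq, mem_inter_iff, mem_preimage, mem_Ioi, sub_pos]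
  tauto

lemma prodMk_mem_horn_iff {A r : ℝ} (hA : 0 < A) {w u : ℂ} (hu : u ≠ 0) :
    (w, u) ∈ horn A r ↔
      w ∈ Metric.ball 0 (min r (Real.exp (-(|Real.log ‖u‖| / A)))) \ {0} := by
  have hlog (hw : w ≠ 0) :
      |Real.log ‖u‖| < A * -Real.log ‖w‖ ↔ ‖w‖ < Real.exp (-(|Real.log ‖u‖| / A)) := by
    rw [← Real.log_lt_iff_lt_exp (norm_pos_iff.2 hw), lt_neg, div_lt_iff₀' hA]
  constructor
  · rintro ⟨hw, -, hwr, hwu⟩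
    exact ⟨by simpa using ⟨hwr, (hlog hw).1 hwu⟩, hw⟩
  · rintro ⟨hball, hw⟩
    have hlt : ‖w‖ < r ∧ ‖w‖ < Real.exp (-(|Real.log ‖u‖| / A)) := by simpa using hball
    exact ⟨hw, hu, hlt.1, (hlog hw).2 hlt.2⟩

lemma prodMk_one_mem_horn_iff {A r : ℝ} (hA : 0 < A) (hr : r ≤ 1) {w : ℂ} :
    (w, 1) ∈ horn A r ↔ w ∈ Metric.ball 0 r \ {0} := by
  simpa [hr] using prodMk_mem_horn_iff (r := r) (w := w) hA one_ne_zero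

/-- Holomorphy and boundedness near `w = 0` on horns of every exponent. -/
def BoundedHolomorphicOnHorns (F : ℂ × ℂ → ℂ) : Prop :=
  ∀ A : ℝ, 0 < A → ∃ r : ℝ, 0 < r ∧
    DifferentiableOn ℂ F (horn A r) ∧ ∃ M : ℝ, ∀ p ∈ horn A r, ‖F p‖ ≤ M

section Horns

variable {F : ℂ × ℂ → ℂ}

lemma annulus_subset_horn {w : ℂ} {N : ℕ} {r : ℝ} (hw : w ≠ 0) (hwr : ‖w‖ < r) (hw1 : ‖w‖ < 1) :
    {u : ℂ | ‖w‖ ^ N ≤ ‖u‖ ∧ ‖u‖ ≤ (‖w‖ ^ N)⁻¹} ⊆ {u | (w, u) ∈ horn (N + 1) r} := by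
  rintro u ⟨hu1, hu2⟩
  have hw0 : 0 < ‖w‖ := norm_pos_iff.2 hw
  have hu0 : 0 < ‖u‖ := lt_of_lt_of_le (by positivity) hu1
  have hlogw : Real.log ‖w‖ < 0 := Real.log_neg hw0 hw1
  have h1 := Real.log_le_log (by positivity) hu1
  have h2 := Real.log_le_log hu0 hu2
  rw [Real.log_pow] at h1
  rw [Real.log_inv, Real.log_pow] at h2
  refine ⟨hw, norm_pos_iff.1 hu0, hwr, ?_⟩
  rw [abs_lt]
  constructor <;> linarith

lemma eventually_mem_annulus {u : ℂ} (hu : u ≠ 0) {N : ℕ} (hN : N ≠ 0) :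
    ∀ᶠ w : ℂ in 𝓝[≠] 0, ‖w‖ ^ N ≤ ‖u‖ ∧ ‖u‖ ≤ (‖w‖ ^ N)⁻¹ := by
  have hlim : Tendsto (fun w : ℂ => ‖w‖ ^ N) (𝓝[≠] 0) (𝓝 0) := by
    have : ContinuousAt (fun w : ℂ => ‖w‖ ^ N) 0 := by fun_prop
    simpa [hN] using this.tendsto.mono_left nhdsWithin_le_nhds
  have hpos : 0 < ‖u‖ := norm_pos_iff.2 hu
  filter_upwards [hlim.eventually_le_const hpos, hlim.eventually_le_const (inv_pos.2 hpos),
    self_mem_nhdsWithin] with w hw1 hw2 hw0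
  have : 0 < ‖w‖ := norm_pos_iff.2 hw0
  exact ⟨hw1, (le_inv_comm₀ hpos (by positivity)).2 hw2⟩

lemma BoundedHolomorphicOnHorns.isBigO_sub_sq (hF : BoundedHolomorphicOnHorns F) {u : ℂ}
    (hu : u ≠ 0) (N : ℕ) :
    (fun w => (F (w, u) - F (w, 1)) ^ 2) =O[𝓝[≠] 0] fun w => w ^ (N + 1) := by
  obtain ⟨r, hr, hdiff, M, hM⟩ := hF ((N + 1 : ℕ) + 1) (by positivity)
  refine Asymptotics.IsBigO.of_bound (4 * (2 * M) ^ 2 * ‖u - 1‖ ^ 2 / ‖u‖) ?_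
  have hsmall : ∀ᶠ w : ℂ in 𝓝[≠] 0, ‖w‖ < min r (1 / 2) := by
    filter_upwards [nhdsWithin_le_nhds
      (Metric.ball_mem_nhds (0 : ℂ) (lt_min hr one_half_pos))] with w hw
    exact mem_ball_zero_iff.1 hw
  filter_upwards [hsmall, eventually_mem_annulus hu N.succ_ne_zero, self_mem_nhdsWithin]
    with w hw hwu hw0
  obtain ⟨hwr, hw2⟩ := lt_min_iff.1 hw
  have hw1 : ‖w‖ < 1 := by linarith
  have hwpos : 0 < ‖w‖ := norm_pos_iff.2 hw0
  have hupos : 0 < ‖u‖ := norm_pos_iff.2 hu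
  have hpow : ‖w‖ ^ (N + 1) ≤ 1 / 2 :=
    (pow_le_of_le_one hwpos.le hw1.le N.succ_ne_zero).trans hw2.le
  have hslice : Continuous fun v : ℂ => (w, v) := by fun_prop
  have hkey := norm_mul_norm_sub_sq_le_of_annulus (Ψ := fun v => F (w, v))
    ((isOpen_horn _ _).preimage hslice) (hdiff.comp (by fun_prop) fun _ hv => hv)
    (fun v hv => hM _ hv) (by positivity) (by linarith) (annulus_subset_horn hw0 hwr hw1) hwu
  have hfrac : ‖w‖ ^ (N + 1) / (1 - ‖w‖ ^ (N + 1)) ^ 2 ≤ 4 * ‖w‖ ^ (N + 1) := by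
    rw [div_le_iff₀ (by nlinarith), mul_right_comm]
    exact le_mul_of_one_le_left (by positivity) (by nlinarith)
  rw [norm_pow, norm_pow, div_mul_eq_mul_div, le_div_iff₀' hupos]
  calc ‖u‖ * ‖F (w, u) - F (w, 1)‖ ^ 2
      ≤ (2 * M) ^ 2 * (‖w‖ ^ (N + 1) / (1 - ‖w‖ ^ (N + 1)) ^ 2) * ‖u - 1‖ ^ 2 := hkey
    _ ≤ (2 * M) ^ 2 * (4 * ‖w‖ ^ (N + 1)) * ‖u - 1‖ ^ 2 := by gcongr
    _ = 4 * (2 * M) ^ 2 * ‖u - 1‖ ^ 2 * ‖w‖ ^ (N + 1) := by ring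

lemma BoundedHolomorphicOnHorns.apply_eq_apply_one (hF : BoundedHolomorphicOnHorns F) {A r : ℝ}
    (hA : 0 < A) (hr : r ≤ 1) (hdiff : DifferentiableOn ℂ F (horn A r))
    {p : ℂ × ℂ} (hp : p ∈ horn A r) : F p = F (p.1, 1) := by
  obtain ⟨w, u⟩ := p
  have hu : u ≠ 0 := hp.2.1
  set s := min r (Real.exp (-(|Real.log ‖u‖| / A)))
  have hs0 : 0 < s := lt_min ((norm_nonneg w).trans_lt hp.2.2.1) (Real.exp_pos _)
  have hdiff' : DifferentiableOn ℂ (fun w => (F (w, u) - F (w, 1)) ^ 2)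
      (Metric.ball 0 s \ {0}) := by
    refine ((hdiff.comp (by fun_prop) fun v hv => ?_).sub
      (hdiff.comp (by fun_prop) fun v hv => ?_)).pow 2
    · exact (prodMk_mem_horn_iff hA hu).2 hv
    · exact (prodMk_one_mem_horn_iff hA hr).2
        ⟨Metric.ball_subset_ball (min_le_left _ _) hv.1, hv.2⟩
  have hflat : ∀ N : ℕ,
      (fun w => (F (w, u) - F (w, 1)) ^ 2) =O[𝓝[≠] 0] fun w => (w - 0) ^ N := by
    intro N
    have hpow : (fun w : ℂ => w ^ (N + 1)) =O[𝓝[≠] 0] fun w => w ^ N := by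
      refine Asymptotics.IsBigO.of_bound 1 ?_
      filter_upwards [nhdsWithin_le_nhds (Metric.ball_mem_nhds (0 : ℂ) one_pos)] with w hw
      rw [one_mul, norm_pow, norm_pow]
      exact pow_le_pow_of_le_one (norm_nonneg w) (mem_ball_zero_iff.1 hw).le N.le_succ
    simpa using (hF.isBigO_sub_sq hu N).trans hpow
  have hzero := eqOn_zero_of_forall_isBigO_pow Metric.isOpen_ball
    (convex_ball (0 : ℂ) s).isPreconnected (Metric.mem_ball_self hs0) hdiff' hflat
    ((prodMk_mem_horn_iff hA hu).1 hp)
  exact sub_eq_zero.1 (pow_eq_zero_iff two_ne_zero |>.1 hzero)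

lemma BoundedHolomorphicOnHorns.exists_eq_comp_fst (hF : BoundedHolomorphicOnHorns F) :
    ∃ r : ℝ, 0 < r ∧ ∃ g : ℂ → ℂ, DifferentiableOn ℂ g (Metric.ball 0 r) ∧
      ∀ A : ℝ, 0 < A → ∃ s : ℝ, 0 < s ∧ ∀ p ∈ horn A s, F p = g p.1 := by
  obtain ⟨r₁, hr₁, hdiff₁, M, hM⟩ := hF 1 one_pos
  set r := min r₁ 1
  have hr : 0 < r := lt_min hr₁ one_pos
  have hslice : ∀ w ∈ Metric.ball 0 r \ {0}, (w, (1 : ℂ)) ∈ horn 1 r₁ := fun w hw =>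
    horn_mono 1 (min_le_left _ _) ((prodMk_one_mem_horn_iff one_pos (min_le_right _ _)).2 hw)
  refine ⟨r, hr, Function.update (fun w => F (w, 1)) 0 (limUnder (𝓝[≠] 0) fun w => F (w, 1)),
    differentiableOn_update_limUnder_of_bddAbove (Metric.ball_mem_nhds 0 hr)
      (hdiff₁.comp (by fun_prop) hslice) ⟨M, ?_⟩, fun A hA => ?_⟩
  · rintro _ ⟨w, hw, rfl⟩
    exact hM _ (hslice w hw)
  · obtain ⟨s, hs, hdiff, -⟩ := hF A hA
    refine ⟨min s 1, lt_min hs one_pos, fun p hp => ?_⟩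
    rw [Function.update_of_ne hp.1]
    exact hF.apply_eq_apply_one hA (min_le_right _ _)
      (hdiff.mono (horn_mono A (min_le_left _ _))) hp

end Horns

section Descent

variable {τ : ℂ} {p p' : ℂ × ℂ}

/-- The map `F₁₀₀(z, ξ) = (q z, ξ - 1)`, with `q = exp (2πiτ)`. -/
noncomputable def shift (τ : ℂ) (p : ℂ × ℂ) : ℂ × ℂ :=
  (exp (2 * (Real.pi : ℂ) * I * τ) * p.1, p.2 - 1)

/-- The quotient map `(z, ξ) ↦ (Y(z, ξ), exp (2πiξ))`: on `z ≠ 0` its fibres are the orbits of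
`shift τ`. -/
noncomputable def orbitMap (τ : ℂ) (p : ℂ × ℂ) : ℂ × ℂ :=
  (p.1 * exp (2 * (Real.pi : ℂ) * I * τ * p.2), exp (2 * (Real.pi : ℂ) * I * p.2))

/-- A fundamental domain of `shift τ`, namely `|q| < |z| ≤ 1`. -/
def fundamentalDomain (τ : ℂ) : Set (ℂ × ℂ) :=
  {p | p.1 ≠ 0 ∧ Real.log ‖p.1‖ ∈ Ioc (-(2 * Real.pi * τ.im)) 0}

/-- The part over the annulus `exp (-c) < |z| < exp c` of the preimage of `W` under
`orbitMap τ`. -/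
def tube (τ : ℂ) (c : ℝ) (W : Set (ℂ × ℂ)) : Set (ℂ × ℂ) :=
  {p | p.1 ≠ 0 ∧ |Real.log ‖p.1‖| < c ∧ orbitMap τ p ∈ W}

/-- The function induced by a `shift τ`-invariant `f` on the orbit space, obtained by evaluating
`f` at a representative in the fundamental domain. -/
noncomputable def descend (τ : ℂ) (f : ℂ × ℂ → ℂ) (P : ℂ × ℂ) : ℂ :=
  f (Function.invFunOn (orbitMap τ) (fundamentalDomain τ) P)

lemma tube_mono_left {c c' : ℝ} (h : c ≤ c') (W : Set (ℂ × ℂ)) : tube τ c W ⊆ tube τ c' W :=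
  fun _ ⟨h1, h2, h3⟩ => ⟨h1, h2.trans_le h, h3⟩

lemma tube_mono_right (c : ℝ) {W W' : Set (ℂ × ℂ)} (h : W ⊆ W') : tube τ c W ⊆ tube τ c W' :=
  fun _ ⟨h1, h2, h3⟩ => ⟨h1, h2, h h3⟩

lemma shift_iterate (τ : ℂ) (n : ℕ) (p : ℂ × ℂ) :
    (shift τ)^[n] p = (exp (2 * (Real.pi : ℂ) * I * τ * n) * p.1, p.2 - n) := by
  induction n with
  | zero => simp
  | succ n ih =>
    rw [Function.iterate_succ_apply', ih, shift, ← mul_assoc, ← exp_add]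
    push_cast
    ring_nf

lemma orbitMap_shift_iterate (τ : ℂ) (n : ℕ) (p : ℂ × ℂ) :
    orbitMap τ ((shift τ)^[n] p) = orbitMap τ p := by
  rw [shift_iterate]
  refine Prod.ext ?_ ?_
  · simp only [orbitMap]
    rw [mul_right_comm, ← exp_add, mul_comm]
    ring_nf
  · simp only [orbitMap]
    rw [mul_sub, exp_sub, mul_comm _ (n : ℂ), exp_nat_mul_two_pi_mul_I, div_one]

lemma log_norm_shift_iterate (n : ℕ) (hp : p.1 ≠ 0) :
    Real.log ‖((shift τ)^[n] p).1‖ = Real.log ‖p.1‖ - 2 * Real.pi * τ.im * n := by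
  rw [shift_iterate, norm_mul, Real.log_mul (by simp) (norm_ne_zero_iff.2 hp), norm_exp,
    Real.log_exp]
  simp only [mul_re, re_ofNat, ofReal_re, im_ofNat, ofReal_im, mul_zero, sub_zero, I_re, mul_im,
    zero_mul, add_zero, I_im, mul_one, sub_self, zero_sub, natCast_re, neg_mul, zero_add,
    natCast_im]
  ring

lemma orbitMap_mul_exp_neg (τ w ξ : ℂ) :
    orbitMap τ (w * exp (-(2 * Real.pi * I * τ * ξ)), ξ) = (w, exp (2 * Real.pi * I * ξ)) := by
  simp [orbitMap, mul_assoc, ← exp_add]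

lemma log_norm_orbitMap_fst (hp : p.1 ≠ 0) :
    Real.log ‖(orbitMap τ p).1‖ = Real.log ‖p.1‖ - 2 * Real.pi * (τ * p.2).im := by
  rw [orbitMap, norm_mul, Real.log_mul (norm_ne_zero_iff.2 hp) (by simp), norm_exp, Real.log_exp,
    mul_assoc _ τ]
  simp only [mul_re, re_ofNat, ofReal_re, im_ofNat, ofReal_im, mul_zero, sub_zero, I_re, mul_im,
    zero_mul, add_zero, I_im, mul_one, sub_self, zero_sub]
  ring

lemma log_norm_orbitMap_snd (τ : ℂ) (p : ℂ × ℂ) :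
    Real.log ‖(orbitMap τ p).2‖ = -(2 * Real.pi * p.2.im) := by
  rw [orbitMap, norm_exp, Real.log_exp]
  simp

lemma eq_shift_iterate_of_orbitMap_eq {n : ℕ} (h : orbitMap τ p = orbitMap τ p')
    (hn : p.2 = p'.2 + n) : p' = (shift τ)^[n] p := by
  have hfst : p.1 * exp (2 * Real.pi * I * τ * p.2) = p'.1 * exp (2 * Real.pi * I * τ * p'.2) :=
    congrArg Prod.fst h
  rw [shift_iterate, Prod.ext_iff]
  refine ⟨mul_right_cancel₀ (exp_ne_zero (2 * Real.pi * I * τ * p'.2)) ?_, by simp [hn]⟩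
  rw [← hfst, hn, mul_add, exp_add]
  ring

lemma exists_eq_shift_iterate (h : orbitMap τ p = orbitMap τ p') :
    ∃ n : ℕ, p' = (shift τ)^[n] p ∨ p = (shift τ)^[n] p' := by
  obtain ⟨k, hk⟩ := exp_eq_exp_iff_exists_int.1 (congrArg Prod.snd h)
  have hk : p.2 = p'.2 + k := by
    refine mul_left_cancel₀ two_pi_I_ne_zero (hk.trans ?_)
    ring
  obtain ⟨n, rfl | rfl⟩ := k.eq_nat_or_neg
  · exact ⟨n, Or.inl (eq_shift_iterate_of_orbitMap_eq h (by simpa using hk))⟩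
  · exact ⟨n, Or.inr (eq_shift_iterate_of_orbitMap_eq h.symm (by simp [hk]))⟩

lemma exists_mem_fundamentalDomain_orbitMap_eq (hτ : 0 < τ.im) {P : ℂ × ℂ} (h1 : P.1 ≠ 0)
    (h2 : P.2 ≠ 0) : ∃ p ∈ fundamentalDomain τ, orbitMap τ p = P := by
  set ξ : ℤ → ℂ := fun n => log P.2 / (2 * Real.pi * I) + n with hξ
  have horbit : ∀ n, orbitMap τ (P.1 * exp (-(2 * Real.pi * I * τ * ξ n)), ξ n) = P := by
    intro n
    rw [orbitMap_mul_exp_neg, hξ, mul_add, mul_div_cancel₀ _ two_pi_I_ne_zero, exp_add,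
      exp_log h2, mul_comm _ (n : ℂ), exp_int_mul_two_pi_mul_I, mul_one]
  obtain ⟨n, hn, -⟩ := existsUnique_add_zsmul_mem_Ioc (show 0 < 2 * Real.pi * τ.im by positivity)
    (Real.log ‖P.1‖ + 2 * Real.pi * (τ * ξ 0).im) (-(2 * Real.pi * τ.im))
  have hz : P.1 * exp (-(2 * Real.pi * I * τ * ξ n)) ≠ 0 := mul_ne_zero h1 (exp_ne_zero _)
  have hlog : Real.log ‖P.1 * exp (-(2 * Real.pi * I * τ * ξ n))‖ =
      Real.log ‖P.1‖ + 2 * Real.pi * (τ * ξ n).im := by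
    have := log_norm_orbitMap_fst (τ := τ) (p := (_, ξ n)) hz
    rw [horbit n] at this
    linarith
  have hξn : (τ * ξ n).im = (τ * ξ 0).im + n * τ.im := by
    simp only [ξ, mul_add, add_im, mul_im, intCast_im, mul_zero, intCast_re, zero_add,
      Int.cast_zero, add_zero, add_right_inj]
    ring
  refine ⟨_, ⟨hz, ?_⟩, horbit n⟩
  rw [hlog, hξn]
  convert hn using 1
  · rw [neg_add_cancel]
  · rw [zsmul_eq_mul]
    ring

lemma exists_section_orbitMap (τ : ℂ) (p : ℂ × ℂ) :
    ∃ s : ℂ × ℂ → ℂ × ℂ, DifferentiableAt ℂ s (orbitMap τ p) ∧ s (orbitMap τ p) = p ∧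
      ∀ᶠ P in 𝓝 (orbitMap τ p), orbitMap τ (s P) = P := by
  have hu : exp (2 * Real.pi * I * p.2) ≠ 0 := exp_ne_zero _
  set ξ : ℂ × ℂ → ℂ := fun P =>
    p.2 + log (P.2 / exp (2 * Real.pi * I * p.2)) / (2 * Real.pi * I) with hξ
  have hξp : ξ (orbitMap τ p) = p.2 := by simp [hξ, orbitMap]
  have hlog : DifferentiableAt ℂ (fun P : ℂ × ℂ => log (P.2 / exp (2 * Real.pi * I * p.2)))
      (orbitMap τ p) := DifferentiableAt.clog (by fun_prop) (by simp [orbitMap])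
  have hξdiff : DifferentiableAt ℂ ξ (orbitMap τ p) := by fun_prop
  refine ⟨fun P => (P.1 * exp (-(2 * Real.pi * I * τ * ξ P)), ξ P), by fun_prop, ?_, ?_⟩
  · simp only [hξp]
    exact Prod.ext (by simp [orbitMap, mul_assoc, ← exp_add]) rfl
  · filter_upwards [continuous_snd.continuousAt.eventually_ne hu] with P hP
    rw [orbitMap_mul_exp_neg, hξ, mul_add, mul_div_cancel₀ _ two_pi_I_ne_zero, exp_add,
      exp_log (div_ne_zero hP hu), mul_div_cancel₀ _ hu]

variable {U W : Set (ℂ × ℂ)} {f : ℂ × ℂ → ℂ} {c : ℝ}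

lemma apply_shift_iterate_of_mem_tube (hτ : 0 < τ.im)
    (hinv : ∀ p ∈ U, shift τ p ∈ U → f (shift τ p) = f p) (hU : tube τ c W ⊆ U)
    (hp : p ∈ tube τ c W) {n : ℕ} (hn : (shift τ)^[n] p ∈ tube τ c W) :
    f ((shift τ)^[n] p) = f p := by
  induction n with
  | zero => rfl
  | succ n ih =>
    have hmem : (shift τ)^[n] p ∈ tube τ c W := by
      have h0 := abs_lt.1 hp.2.1
      have h1 := abs_lt.1 hn.2.1
      rw [log_norm_shift_iterate _ hp.1] at h1
      push_cast at h1
      refine ⟨by simp [shift_iterate, hp.1], ?_, (orbitMap_shift_iterate τ n p).symm ▸ hp.2.2⟩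
      have : 0 ≤ 2 * Real.pi * τ.im * n := by positivity
      have : 0 < 2 * Real.pi * τ.im := by positivity
      rw [log_norm_shift_iterate _ hp.1, abs_lt]
      constructor <;> linarith
    rw [Function.iterate_succ_apply'] at hn ⊢
    rw [hinv _ (hU hmem) (hU hn), ih hmem]

lemma apply_eq_of_orbitMap_eq (hτ : 0 < τ.im)
    (hinv : ∀ p ∈ U, shift τ p ∈ U → f (shift τ p) = f p) (hU : tube τ c W ⊆ U)
    (hp : p ∈ tube τ c W) (hp' : p' ∈ tube τ c W) (h : orbitMap τ p = orbitMap τ p') :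
    f p = f p' := by
  obtain ⟨n, rfl | rfl⟩ := exists_eq_shift_iterate h
  · exact (apply_shift_iterate_of_mem_tube hτ hinv hU hp hp').symm
  · exact apply_shift_iterate_of_mem_tube hτ hinv hU hp' hp

lemma mem_tube_of_mem_fundamentalDomain (hτ : 0 < τ.im) (hc : 2 * Real.pi * τ.im < c)
    (hp : p ∈ fundamentalDomain τ) (hW : orbitMap τ p ∈ W) : p ∈ tube τ c W := by
  obtain ⟨hp0, hlow, hup⟩ := hp
  have : 0 < 2 * Real.pi * τ.im := by positivity
  exact ⟨hp0, abs_lt.2 ⟨by linarith, by linarith⟩, hW⟩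

lemma descend_orbitMap (hτ : 0 < τ.im)
    (hinv : ∀ p ∈ U, shift τ p ∈ U → f (shift τ p) = f p) (hU : tube τ c W ⊆ U)
    (hc : 2 * Real.pi * τ.im < c) (hp : p ∈ tube τ c W) :
    descend τ f (orbitMap τ p) = f p := by
  have hex := exists_mem_fundamentalDomain_orbitMap_eq hτ (P := orbitMap τ p)
    (mul_ne_zero hp.1 (exp_ne_zero _)) (exp_ne_zero _)
  have heq := Function.invFunOn_eq hex
  exact apply_eq_of_orbitMap_eq hτ hinv hU
    (mem_tube_of_mem_fundamentalDomain hτ hc (Function.invFunOn_mem hex) (heq.symm ▸ hp.2.2))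
    hp heq

lemma norm_descend_le (hτ : 0 < τ.im) (hU : tube τ c W ⊆ U) (hc : 2 * Real.pi * τ.im < c)
    {M : ℝ} (hM : ∀ p ∈ U, ‖f p‖ ≤ M) {P : ℂ × ℂ} (hP : P ∈ W) (h1 : P.1 ≠ 0) (h2 : P.2 ≠ 0) :
    ‖descend τ f P‖ ≤ M := by
  have hex := exists_mem_fundamentalDomain_orbitMap_eq hτ h1 h2
  exact hM _ (hU (mem_tube_of_mem_fundamentalDomain hτ hc (Function.invFunOn_mem hex)
    ((Function.invFunOn_eq hex).symm ▸ hP)))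

lemma differentiableAt_descend (hτ : 0 < τ.im) (hUo : IsOpen U) (hf : DifferentiableOn ℂ f U)
    (hinv : ∀ p ∈ U, shift τ p ∈ U → f (shift τ p) = f p) (hU : tube τ c W ⊆ U)
    (hc : 2 * Real.pi * τ.im < c) (hWo : IsOpen W) {P : ℂ × ℂ} (hP : P ∈ W) (h1 : P.1 ≠ 0)
    (h2 : P.2 ≠ 0) : DifferentiableAt ℂ (descend τ f) P := by
  obtain ⟨p, hpD, rfl⟩ := exists_mem_fundamentalDomain_orbitMap_eq hτ h1 h2
  have hp := mem_tube_of_mem_fundamentalDomain hτ hc hpD hP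
  obtain ⟨s, hs, hsp, hsection⟩ := exists_section_orbitMap τ p
  have hs1 : ContinuousAt (fun P => (s P).1) (orbitMap τ p) := hs.continuousAt.fst
  have hs1p : (s (orbitMap τ p)).1 ≠ 0 := by rw [hsp]; exact hp.1
  have hlog : ContinuousAt (fun P => |Real.log ‖(s P).1‖|) (orbitMap τ p) :=
    (hs1.norm.log (norm_ne_zero_iff.2 hs1p)).abs
  have hlogp : |Real.log ‖(s (orbitMap τ p)).1‖| < c := by rw [hsp]; exact hp.2.1
  have hcomp : descend τ f =ᶠ[𝓝 (orbitMap τ p)] f ∘ s := by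
    filter_upwards [hsection, hWo.mem_nhds hP, hs1.eventually_ne hs1p,
      hlog.eventually_lt_const hlogp] with Q hQ hQW hQ1 hQlog
    rw [Function.comp_apply, ← descend_orbitMap hτ hinv hU hc ⟨hQ1, hQlog, hQ.symm ▸ hQW⟩, hQ]
  refine DifferentiableAt.congr_of_eventuallyEq (.comp _ ?_ hs) hcomp
  rw [hsp]
  exact hf.differentiableAt (hUo.mem_nhds (hU hp))

end Descent

section Sectors

lemma mul_norm_le_im_of_arg_mem {ζ : ℂ} {ε : ℝ} (hε : 0 ≤ ε) (h1 : ε ≤ arg ζ)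
    (h2 : arg ζ ≤ Real.pi - ε) : 2 / Real.pi * ε * ‖ζ‖ ≤ ζ.im := by
  have hsin : 2 / Real.pi * ε ≤ Real.sin (arg ζ) := by
    rcases le_total (arg ζ) (Real.pi / 2) with h | h
    · exact le_trans (by gcongr) (Real.mul_le_sin (hε.trans h1) h)
    · rw [← Real.sin_pi_sub]
      refine le_trans ?_ (Real.mul_le_sin (by linarith) (by linarith))
      gcongr
      linarith
  rw [← norm_mul_sin_arg, mul_comm]
  gcongr

lemma arg_mem_of_mul_norm_lt_im {ζ : ℂ} {ε : ℝ} (hε : 0 ≤ ε) (h : ε * ‖ζ‖ < ζ.im) :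
    ε < arg ζ ∧ arg ζ < Real.pi - ε := by
  have him : 0 < ζ.im := lt_of_le_of_lt (by positivity) h
  have hζ : 0 < ‖ζ‖ := norm_pos_iff.2 fun h0 => by simp [h0] at him
  have hsin : ε < Real.sin (arg ζ) := by rwa [sin_arg, lt_div_iff₀ hζ]
  refine ⟨hsin.trans_le (Real.sin_le (arg_nonneg_iff.2 him.le)), ?_⟩
  rw [← Real.sin_pi_sub] at hsin
  linarith [Real.sin_le (sub_nonneg.2 (arg_le_pi ζ))]

variable {τ : ℂ}

lemma arg_mem_iff_arg_mul_mem (hτ : 0 < τ.im) {ξ : ℂ} (hξ : ξ ≠ 0) {ε : ℝ} (hε : 0 ≤ ε) :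
    -arg τ + ε < arg ξ ∧ arg ξ < Real.pi - arg τ - ε ↔
      ε < arg (τ * ξ) ∧ arg (τ * ξ) < Real.pi - ε := by
  have hτ0 : τ ≠ 0 := fun h => by simp [h] at hτ
  have hpos : 0 ≤ arg τ := arg_nonneg_iff.2 hτ.le
  have hlt : arg τ < Real.pi := arg_lt_pi_iff.2 (Or.inr hτ.ne')
  have harg (h : arg τ + arg ξ ∈ Ioc (-Real.pi) Real.pi) : arg (τ * ξ) = arg τ + arg ξ :=
    arg_mul hτ0 hξ h
  constructor
  · rintro ⟨h1, h2⟩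
    rw [harg ⟨by linarith, by linarith⟩]
    constructor <;> linarith
  · rintro ⟨h1, h2⟩
    have hinv : arg τ⁻¹ = -arg τ := by rw [arg_inv, if_neg hlt.ne]
    have hdiv : arg ξ = arg τ⁻¹ + arg (τ * ξ) := by
      rw [← arg_mul (inv_ne_zero hτ0) (mul_ne_zero hτ0 hξ), inv_mul_cancel_left₀ hτ0]
      rw [hinv]
      constructor <;> linarith
    rw [hdiv, hinv]
    constructor <;> linarith

lemma mem_Tsector_iff (hτ : 0 < τ.im) {c ε R : ℝ} (hε : 0 ≤ ε) (hR : 0 ≤ R) {p : ℂ × ℂ} :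
    p ∈ Tsector τ c ε R ↔ p.1 ≠ 0 ∧ |Real.log ‖p.1‖| < c ∧ R < ‖p.2‖ ∧
      ε < arg (τ * p.2) ∧ arg (τ * p.2) < Real.pi - ε := by
  have hlog (hp : p.1 ≠ 0) :
      |Real.log ‖p.1‖| < c ↔ Real.exp (-c) < ‖p.1‖ ∧ ‖p.1‖ < Real.exp c := by
    rw [abs_lt, Real.lt_log_iff_exp_lt (norm_pos_iff.2 hp),
      Real.log_lt_iff_lt_exp (norm_pos_iff.2 hp)]
  have harg (hp : R < ‖p.2‖) :=
    arg_mem_iff_arg_mul_mem hτ (norm_pos_iff.1 (hR.trans_lt hp)) hε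
  constructor
  · rintro ⟨h1, h2, h3, h4, h5⟩
    exact ⟨h1, (hlog h1).2 ⟨h2, h3⟩, h4, (harg h4).1 h5⟩
  · rintro ⟨h1, h2, h3, h4⟩
    exact ⟨h1, ((hlog h1).1 h2).1, ((hlog h1).1 h2).2, h3, (harg h3).2 h4⟩

lemma exists_Tsector_subset_tube_horn (hτ : 0 < τ.im) {c : ℝ} (hc : 0 < c) {ε : ℝ}
    (hε : 0 < ε) : ∃ A : ℝ, 0 < A ∧ ∀ r : ℝ, 0 < r →
      ∃ R : ℝ, 0 < R ∧ Tsector τ c ε R ⊆ tube τ c (horn A r) := by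
  have hτ0 : 0 < ‖τ‖ := norm_pos_iff.2 fun h => by simp [h] at hτ
  set k := 2 / Real.pi * ε * ‖τ‖ with hk
  have hk0 : 0 < k := by positivity
  refine ⟨2 / k, by positivity, fun r hr => ⟨(c + |Real.log r|) / k, by positivity, ?_⟩⟩
  intro p hp
  obtain ⟨hp1, hpc, hpR, harg1, harg2⟩ := (mem_Tsector_iff hτ hε.le (by positivity)).1 hp
  have him : k * ‖p.2‖ ≤ (τ * p.2).im := by
    rw [hk, mul_assoc, ← norm_mul]
    exact mul_norm_le_im_of_arg_mem hε.le harg1.le harg2.le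
  rw [div_lt_iff₀' hk0] at hpR
  have hv : c + |Real.log r| < (τ * p.2).im := hpR.trans_le him
  have hv0 : 0 < (τ * p.2).im := lt_trans (by positivity) hv
  have hz := abs_lt.1 hpc
  have hπv : 3 * (τ * p.2).im < Real.pi * (τ * p.2).im := by
    gcongr
    exact Real.pi_gt_three
  have hw0 : (orbitMap τ p).1 ≠ 0 := mul_ne_zero hp1 (exp_ne_zero _)
  refine ⟨hp1, hpc, hw0, exp_ne_zero _, ?_, ?_⟩
  · rw [← Real.log_lt_log_iff (norm_pos_iff.2 hw0) hr, log_norm_orbitMap_fst hp1]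
    linarith [neg_abs_le (Real.log r)]
  · rw [log_norm_orbitMap_snd, log_norm_orbitMap_fst hp1, abs_neg, abs_mul,
      abs_of_pos Real.two_pi_pos, div_mul_eq_mul_div, lt_div_iff₀ hk0]
    calc 2 * Real.pi * |p.2.im| * k ≤ 2 * Real.pi * ‖p.2‖ * k := by
          gcongr
          exact abs_im_le_norm _
      _ = 2 * Real.pi * (k * ‖p.2‖) := by ring
      _ ≤ 2 * Real.pi * (τ * p.2).im := by gcongr
      _ < 2 * -(Real.log ‖p.1‖ - 2 * Real.pi * (τ * p.2).im) := by
          linarith [abs_nonneg (Real.log r)]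

lemma norm_le_mul_im_mul (hτ : 0 < τ.im) {ξ : ℂ} {B : ℝ} (hv : 0 ≤ (τ * ξ).im)
    (hB : |ξ.im| ≤ B * (τ * ξ).im) :
    ‖ξ‖ ≤ ((1 + B * |τ.re|) / τ.im + B) * (τ * ξ).im := by
  have hre : |ξ.re| ≤ (1 + B * |τ.re|) / τ.im * (τ * ξ).im := by
    rw [div_mul_eq_mul_div, le_div_iff₀ hτ]
    calc |ξ.re| * τ.im = |(τ * ξ).im - τ.re * ξ.im| := by
          rw [mul_im, add_sub_cancel_left, abs_mul, abs_of_pos hτ, mul_comm]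
      _ ≤ |(τ * ξ).im| + |τ.re| * |ξ.im| := by
          rw [← abs_mul]
          exact abs_sub _ _
      _ ≤ (τ * ξ).im + |τ.re| * (B * (τ * ξ).im) := by
          rw [abs_of_nonneg hv]
          gcongr
      _ = (1 + B * |τ.re|) * (τ * ξ).im := by ring
  calc ‖ξ‖ ≤ |ξ.re| + |ξ.im| := norm_le_abs_re_add_abs_im ξ
    _ ≤ _ := by linarith

lemma exists_tube_horn_subset_Tsector (hτ : 0 < τ.im) (c : ℝ) {A : ℝ} (hA : 0 < A) :
    ∃ ε : ℝ, 0 < ε ∧ ∀ R : ℝ, 0 < R →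
      ∃ r : ℝ, 0 < r ∧ tube τ c (horn A r) ⊆ Tsector τ c ε R := by
  have hτ0 : 0 < ‖τ‖ := norm_pos_iff.2 fun h => by simp [h] at hτ
  set K := (1 + 2 * A * |τ.re|) / τ.im + 2 * A
  have hK : 0 < K := by positivity
  refine ⟨1 / (2 * ‖τ‖ * K), by positivity, fun R hR =>
    ⟨Real.exp (-(2 * c + 2 * Real.pi * (‖τ‖ * R))), Real.exp_pos _, ?_⟩⟩
  rintro p ⟨hp1, hpc, hw, -, hwr, hwu⟩
  rw [← Real.log_lt_iff_lt_exp (norm_pos_iff.2 hw), log_norm_orbitMap_fst hp1] at hwr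
  rw [log_norm_orbitMap_snd, log_norm_orbitMap_fst hp1, abs_neg, abs_mul,
    abs_of_pos Real.two_pi_pos] at hwu
  have hz := abs_lt.1 hpc
  have hv : ‖τ‖ * R < (τ * p.2).im := by
    refine lt_of_mul_lt_mul_left ?_ Real.two_pi_pos.le
    linarith
  have hcv : c < 2 * Real.pi * (τ * p.2).im := by
    have : 0 ≤ 2 * Real.pi * (‖τ‖ * R) := by positivity
    linarith
  have hv0 : 0 < (τ * p.2).im := lt_trans (by positivity) hv
  have him : |p.2.im| ≤ 2 * A * (τ * p.2).im := by
    refine le_of_mul_le_mul_left ?_ Real.two_pi_pos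
    calc 2 * Real.pi * |p.2.im| ≤ A * -(Real.log ‖p.1‖ - 2 * Real.pi * (τ * p.2).im) := hwu.le
      _ ≤ A * (2 * (2 * Real.pi * (τ * p.2).im)) := by
        gcongr
        linarith
      _ = 2 * Real.pi * (2 * A * (τ * p.2).im) := by ring
  refine (mem_Tsector_iff hτ (by positivity) hR.le).2
    ⟨hp1, hpc, ?_, arg_mem_of_mul_norm_lt_im (by positivity) ?_⟩
  · refine lt_of_mul_lt_mul_left (hv.trans_le ?_) hτ0.le
    simpa only [norm_mul] using im_le_norm (τ * p.2)
  · calc 1 / (2 * ‖τ‖ * K) * ‖τ * p.2‖ = ‖p.2‖ / (2 * K) := by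
          rw [norm_mul]
          field_simp
      _ ≤ K * (τ * p.2).im / (2 * K) := by
          gcongr
          exact norm_le_mul_im_mul hτ hv0.le him
      _ = (τ * p.2).im / 2 := by field_simp
      _ < (τ * p.2).im := half_lt_self hv0

lemma eventually_mem_Tsector (hτ : 0 < τ.im) {c ε R : ℝ} (hc : 0 < c) (hε : 0 ≤ ε)
    (hε' : ε < Real.pi / 2) (hR : 0 ≤ R) :
    ∀ᶠ t : ℝ in atTop, ((1 : ℂ), t * I / τ) ∈ Tsector τ c ε R := by
  have hτ0 : τ ≠ 0 := fun h => by simp [h] at hτ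
  filter_upwards [eventually_gt_atTop (R * ‖τ‖), eventually_gt_atTop 0] with t htR ht
  refine (mem_Tsector_iff hτ hε hR).2 ⟨one_ne_zero, by simpa using hc, ?_, ?_⟩
  · simpa [lt_div_iff₀ (norm_pos_iff.2 hτ0), abs_of_pos ht] using htR
  · rw [mul_div_cancel₀ _ hτ0, arg_real_mul I ht, arg_I]
    constructor <;> linarith

lemma apply_zero_eq_zero_of_small (hτ : 0 < τ.im) {f : ℂ × ℂ → ℂ} {g : ℂ → ℂ}
    (hg : ContinuousAt g 0) {c ε : ℝ} (hc : 0 < c) (hε : 0 ≤ ε) (hε' : ε < Real.pi / 2)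
    (hfg : ∃ R : ℝ, 0 < R ∧ ∀ p ∈ Tsector τ c ε R, f p = g (orbitMap τ p).1)
    (hsmall : ∀ η : ℝ, 0 < η → ∃ R : ℝ, 0 < R ∧ ∀ p ∈ Tsector τ c ε R, ‖f p‖ ≤ η) :
    g 0 = 0 := by
  have hτ0 : τ ≠ 0 := fun h => by simp [h] at hτ
  obtain ⟨R, hR, hfg⟩ := hfg
  have hY : Tendsto (fun t : ℝ => (orbitMap τ (1, t * I / τ)).1) atTop (𝓝 0) := by
    rw [tendsto_zero_iff_norm_tendsto_zero]
    refine (Real.tendsto_exp_neg_atTop_nhds_zero.comp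
      (tendsto_id.const_mul_atTop Real.two_pi_pos)).congr fun t => ?_
    rw [orbitMap, one_mul, mul_assoc, mul_div_cancel₀ _ hτ0, norm_exp]
    simp
  have hf0 : Tendsto (fun t : ℝ => f (1, t * I / τ)) atTop (𝓝 0) := by
    refine NormedAddGroup.tendsto_nhds_zero.2 fun η hη => ?_
    obtain ⟨R', hR', hη'⟩ := hsmall (η / 2) (half_pos hη)
    filter_upwards [eventually_mem_Tsector hτ hc hε hε' hR'.le] with t ht
    exact (hη' _ ht).trans_lt (half_lt_self hη)
  refine tendsto_nhds_unique (hg.tendsto.comp hY) (hf0.congr' ?_)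
  filter_upwards [eventually_mem_Tsector hτ hc hε hε' hR.le] with t ht using hfg _ ht

lemma exists_tube_horn_subset (hτ : 0 < τ.im) {U : Set (ℂ × ℂ)}
    (hU : ∀ c : ℝ, 0 < c → ∀ ε : ℝ, 0 < ε → ∃ R : ℝ, 0 < R ∧ Tsector τ c ε R ⊆ U) {c A : ℝ}
    (hc : 0 < c) (hA : 0 < A) : ∃ r : ℝ, 0 < r ∧ tube τ c (horn A r) ⊆ U := by
  obtain ⟨ε, hε, hsub⟩ := exists_tube_horn_subset_Tsector hτ c hA
  obtain ⟨R, hR, hRU⟩ := hU c hc ε hε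
  obtain ⟨r, hr, hrR⟩ := hsub R hR
  exact ⟨r, hr, hrR.trans hRU⟩

lemma boundedHolomorphicOnHorns_descend (hτ : 0 < τ.im) {U : Set (ℂ × ℂ)} (hUo : IsOpen U)
    (hU : ∀ c : ℝ, 0 < c → ∀ ε : ℝ, 0 < ε → ∃ R : ℝ, 0 < R ∧ Tsector τ c ε R ⊆ U)
    {f : ℂ × ℂ → ℂ} (hf : DifferentiableOn ℂ f U) {M : ℝ} (hM : ∀ p ∈ U, ‖f p‖ ≤ M)
    (hinv : ∀ p ∈ U, shift τ p ∈ U → f (shift τ p) = f p) :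
    BoundedHolomorphicOnHorns (descend τ f) := by
  intro A hA
  have hc : 2 * Real.pi * τ.im < 2 * Real.pi * τ.im + 1 := lt_add_one _
  obtain ⟨r, hr, htube⟩ :=
    exists_tube_horn_subset hτ hU (show 0 < 2 * Real.pi * τ.im + 1 by positivity) hA
  exact ⟨r, hr,
    fun P hP => (differentiableAt_descend hτ hUo hf hinv htube hc (isOpen_horn A r) hP hP.1
      hP.2.1).differentiableWithinAt,
    M, fun P hP => norm_descend_le hτ htube hc hM hP hP.1 hP.2.1⟩

lemma exists_Tsector_apply_eq_descend (hτ : 0 < τ.im) {U : Set (ℂ × ℂ)}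
    (hU : ∀ c : ℝ, 0 < c → ∀ ε : ℝ, 0 < ε → ∃ R : ℝ, 0 < R ∧ Tsector τ c ε R ⊆ U)
    {f : ℂ × ℂ → ℂ} (hinv : ∀ p ∈ U, shift τ p ∈ U → f (shift τ p) = f p) {c ε : ℝ}
    (hc : 0 < c) (hε : 0 < ε) : ∃ A : ℝ, 0 < A ∧ ∀ s : ℝ, 0 < s → ∃ R : ℝ, 0 < R ∧
      ∀ p ∈ Tsector τ c ε R, orbitMap τ p ∈ horn A s ∧ f p = descend τ f (orbitMap τ p) := by
  obtain ⟨A, hA, hsub⟩ := exists_Tsector_subset_tube_horn hτ hc hε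
  refine ⟨A, hA, fun s hs => ?_⟩
  set c' := max c (2 * Real.pi * τ.im + 1)
  have hc' : 2 * Real.pi * τ.im < c' := (lt_add_one _).trans_le (le_max_right _ _)
  obtain ⟨r, hr, htube⟩ := exists_tube_horn_subset hτ hU (lt_max_of_lt_left hc : 0 < c') hA
  obtain ⟨R, hR, hRsub⟩ := hsub (min r s) (lt_min hr hs)
  refine ⟨R, hR, fun p hp => ⟨horn_mono A (min_le_right _ _) (hRsub hp).2.2, ?_⟩⟩
  have hmem : p ∈ tube τ c' (horn A r) := tube_mono_left (le_max_left _ _) _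
    (tube_mono_right c (horn_mono A (min_le_left _ _)) (hRsub hp))
  exact (descend_orbitMap hτ hinv htube hc' hmem).symm

end Sectors

/-- a bounded holomorphic function on a transversely sectorial domain of
opening `(−ϖ, π − ϖ)` invariant under `F₁₀₀(z,ξ) = (qz, ξ−1)` is a first integral of the
fibration `Y(z,ξ) = z·exp(2πiτξ)`: it factors as `f(z,ξ) = g(z·exp(2πiτξ))` with `g`
holomorphic on a disc; if moreover `f` is (sup-)small at infinity then `g(0) = 0`. -/
theorem statement6 (τ : ℂ) (hτ : 0 < τ.im)
    (U : Set (ℂ × ℂ)) (hUopen : IsOpen U) (hU0 : U ⊆ {p : ℂ × ℂ | p.1 ≠ 0})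
    (hUsect : ∀ c : ℝ, 0 < c → ∀ ε : ℝ, 0 < ε → ∃ R : ℝ, 0 < R ∧ Tsector τ c ε R ⊆ U)
    (f : ℂ × ℂ → ℂ) (hf : DifferentiableOn ℂ f U)
    (hbd : ∃ M : ℝ, ∀ p ∈ U, ‖f p‖ ≤ M)
    (hinv : ∀ p : ℂ × ℂ, p ∈ U →
      (Complex.exp (2 * (Real.pi : ℂ) * Complex.I * τ) * p.1, p.2 - 1) ∈ U →
      f (Complex.exp (2 * (Real.pi : ℂ) * Complex.I * τ) * p.1, p.2 - 1) = f p) :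
    ∃ r : ℝ, 0 < r ∧ ∃ g : ℂ → ℂ,
      DifferentiableOn ℂ g {w : ℂ | ‖w‖ < r} ∧
      (∀ c : ℝ, 0 < c → ∀ ε : ℝ, 0 < ε → ∃ R : ℝ, 0 < R ∧
        ∀ p ∈ Tsector τ c ε R,
          f p = g (p.1 * Complex.exp (2 * (Real.pi : ℂ) * Complex.I * τ * p.2))) ∧
      ((∀ c : ℝ, 0 < c → ∀ ε : ℝ, 0 < ε → ∀ η : ℝ, 0 < η → ∃ R : ℝ, 0 < R ∧
          ∀ p ∈ Tsector τ c ε R, ‖f p‖ ≤ η) → g 0 = 0) := by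
  obtain ⟨M, hM⟩ := hbd
  obtain ⟨r, hr, g, hg, hdesc⟩ :=
    (boundedHolomorphicOnHorns_descend hτ hUopen hUsect hf hM hinv).exists_eq_comp_fst
  have hfg : ∀ c : ℝ, 0 < c → ∀ ε : ℝ, 0 < ε → ∃ R : ℝ, 0 < R ∧
      ∀ p ∈ Tsector τ c ε R, f p = g (orbitMap τ p).1 := by
    intro c hc ε hε
    obtain ⟨A, hA, hfdesc⟩ := exists_Tsector_apply_eq_descend hτ hUsect hinv hc hε
    obtain ⟨s, hs, hsg⟩ := hdesc A hA
    obtain ⟨R, hR, hpR⟩ := hfdesc s hs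
    exact ⟨R, hR, fun p hp => (hpR p hp).2.trans (hsg _ (hpR p hp).1)⟩
  refine ⟨r, hr, g, ball_zero_eq (E := ℂ) r ▸ hg, hfg, fun hsmall => ?_⟩
  exact apply_zero_eq_zero_of_small hτ (hg.continuousOn.continuousAt (Metric.ball_mem_nhds 0 hr))
    one_pos zero_le_one (by linarith [Real.pi_gt_three]) (hfg 1 one_pos 1 one_pos)
    (hsmall 1 one_pos 1 one_pos)
end

section
/- For every pair of integers (m,n) ∈ ℤ², the following are equivalent: (i) for every θ ∈ (0, π−ϖ) one has Im((m + n·τ)·e^{iθ}) ≥ 0; (ii) m ≥ 0 and n ≥ 0. (This is the lattice-direction criterion used to show that only monomials X^m Y^n with m, n ≥ 0 survive in the Laurent expansion of a bounded invariant function.) -/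
open Complex

/-!
By `ℝ`-linearity `Im((a + bτ)e^{iθ}) = a sin θ + b ‖τ‖ sin(arg τ + θ)`. Both sines are nonnegative
on `[0, π - arg τ]`, and each vanishes at one endpoint. By continuity, nonnegativity on the open
interval passes to the endpoints, where the value is a positive multiple of `b` and of `a`
respectively.
-/

theorem im_mul_exp_ofReal_mul_I (z : ℂ) (θ : ℝ) :
    (z * exp (θ * I)).im = ‖z‖ * Real.sin (z.arg + θ) := by
  calc (z * exp (θ * I)).im = (‖z‖ * exp ((z.arg + θ : ℝ) * I)).im := by
        rw [ofReal_add, add_mul, exp_add, ← mul_assoc, norm_mul_exp_arg_mul_I]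
    _ = ‖z‖ * Real.sin (z.arg + θ) := by
        rw [im_ofReal_mul, exp_ofReal_mul_I_im]

theorem im_add_mul_mul_exp_ofReal_mul_I (τ : ℂ) (a b θ : ℝ) :
    ((a + b * τ) * exp (θ * I)).im =
      a * Real.sin θ + b * ‖τ‖ * Real.sin (τ.arg + θ) := by
  rw [add_mul, mul_assoc, add_im, im_ofReal_mul, im_ofReal_mul, exp_ofReal_mul_I_im,
    im_mul_exp_ofReal_mul_I, ← mul_assoc]

theorem arg_mem_Ioo_of_im_pos {z : ℂ} (hz : 0 < z.im) : z.arg ∈ Set.Ioo 0 Real.pi :=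
  ⟨(arg_nonneg_iff.2 hz.le).lt_of_ne' fun h => hz.ne' (arg_eq_zero_iff.1 h).2,
    arg_lt_pi_iff.2 (Or.inr hz.ne')⟩

theorem forall_mul_sin_add_mul_sin_nonneg_iff {φ : ℝ} (hφ : φ ∈ Set.Ioo 0 Real.pi) (a b : ℝ) :
    (∀ θ ∈ Set.Ioo 0 (Real.pi - φ), 0 ≤ a * Real.sin θ + b * Real.sin (φ + θ)) ↔
      0 ≤ a ∧ 0 ≤ b := by
  obtain ⟨hφ_pos, hφ_lt⟩ := hφ
  have hsin : 0 < Real.sin φ := Real.sin_pos_of_pos_of_lt_pi hφ_pos hφ_lt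
  have hlen : 0 < Real.pi - φ := sub_pos.2 hφ_lt
  constructor
  · intro h
    have hclosed : ∀ θ ∈ Set.Icc 0 (Real.pi - φ), 0 ≤ a * Real.sin θ + b * Real.sin (φ + θ) := by
      rw [← closure_Ioo hlen.ne]
      exact le_on_closure h (by fun_prop) (by fun_prop)
    have hleft : 0 ≤ b * Real.sin φ := by
      simpa using hclosed 0 (Set.left_mem_Icc.2 hlen.le)
    have hright : 0 ≤ a * Real.sin φ := by
      simpa using hclosed (Real.pi - φ) (Set.right_mem_Icc.2 hlen.le)
    exact ⟨nonneg_of_mul_nonneg_left hright hsin, nonneg_of_mul_nonneg_left hleft hsin⟩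
  · rintro ⟨ha, hb⟩ θ ⟨hθ_pos, hθ_lt⟩
    have hsin_θ : 0 ≤ Real.sin θ :=
      Real.sin_nonneg_of_nonneg_of_le_pi hθ_pos.le (by linarith)
    have hsin_add : 0 ≤ Real.sin (φ + θ) :=
      Real.sin_nonneg_of_nonneg_of_le_pi (by linarith) (by linarith)
    exact add_nonneg (mul_nonneg ha hsin_θ) (mul_nonneg hb hsin_add)

theorem statement7_general (τ : ℂ) (hτ : 0 < τ.im) (a b : ℝ) :
    (∀ θ : ℝ, 0 < θ → θ < Real.pi - τ.arg → 0 ≤ ((a + b * τ) * exp (θ * I)).im) ↔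
      0 ≤ a ∧ 0 ≤ b := by
  have hτ_norm : 0 < ‖τ‖ := hτ.trans_le (im_le_norm τ)
  have hsines := forall_mul_sin_add_mul_sin_nonneg_iff (arg_mem_Ioo_of_im_pos hτ) a (b * ‖τ‖)
  simpa only [im_add_mul_mul_exp_ofReal_mul_I, mul_nonneg_iff_of_pos_right hτ_norm,
    Set.mem_Ioo, and_imp] using hsines

/-- lattice-direction criterion: for `m, n ∈ ℤ`,
`Im((m + nτ)·e^{iθ}) ≥ 0` for all `θ ∈ (0, π − ϖ)` (where `ϖ = arg τ`) iff `m ≥ 0` and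
`n ≥ 0`. -/
theorem statement7 (τ : ℂ) (hτ : 0 < τ.im) (m n : ℤ) :
    (∀ θ : ℝ, 0 < θ → θ < Real.pi - Complex.arg τ →
      0 ≤ (((m : ℂ) + (n : ℂ) * τ) * Complex.exp ((θ : ℂ) * Complex.I)).im) ↔
    (0 ≤ m ∧ 0 ≤ n) := by
  simpa only [ofReal_intCast, Int.cast_nonneg_iff] using statement7_general τ hτ m n
end
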